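/- Let ζ = exp(2πi/5) and define R̃(z,q) = (1+z)(z²q;q)_∞ (z^{-2}q;q)_∞ (q;q)_∞ R(z;q). Then U_{5,4}( R̃(ζ,q) ) = (ζ² + ζ⁴) J_5² J_{5,1}² / J_{5,2}² − q^{-1} (2 + 2ζ + ζ³) ( R̃(q²,q⁵) − J_{5,1} ), where the J-products are in the variable q. -/

import Mathlib

/-!
The proof rests on a double series of Hecke–Rogers type for the normalized rank generating function,
`R̃(z;q) = ∑_{n ≥ 0} ∑_{2|k| ≤ n} (-1)^{n+k} (z^{n+1} + z^{-n}) q^{n(n+1)/2 - k(3k+1)/2}`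
(`rankGFtilde_eq_hr`), valid for `|q| < |z| < 1/|q|`. Both sides satisfy the same inhomogeneous
functional equation under `z ↦ zq`: for the left side it comes from sorting partitions by largest
part, which gives a series covered by Fine's functional equation (`rankGFtilde_step`), for the right
side from telescoping in `n` together with Jacobi's triple product (`hr_step`). The difference of
the two sides has a Laurent expansion in `z` and satisfies the homogeneous equation, so comparing
coefficients shows that it is a constant multiple of a theta function; as both sides vanish at `z =
-1`, it is zero (`laurent_zero`).

At `z = ζ` the exponent is `4` modulo `5` only for `n ≡ 0, 4` or `n ≡ 1, 3` modulo `5` (`ex_mod`), and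
`ζ^{n+1} + ζ^{-n}` is `1 + ζ` in the first case and `ζ² + ζ⁴` in the second. So the section is
`(ζ² + ζ⁴) V + (2 + 2ζ + ζ³) X`, where `V` is the section of
`∑ (-1)^{n+k} q^{n(n+1)/2 - k(3k+1)/2}` and `X` is its part with `n ≡ 0, 4` modulo `5` (`zcP_sect`).

* The case `z = 1` of the expansion, where `R̃(1;q) = 2 (q;q)_∞²`, shows that `V` is the section of
  `(q;q)_∞²`. Pentagonal numbers are `0, 1, 2` modulo `5`, so `V` is the square of the section of
  Euler's pentagonal series along exponents `2` modulo `5` (`vTerm_tsum`), and the quintuple product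
  evaluates it (`zSum_sq`).
* In `X` the index `k` is `-1` modulo `5`. After `n = 5m` or `5m + 4` and `k = 5l - 1`, the terms of
  `qX` are the negatives of the terms of the expansion of `R̃(q²;q⁵)`, except on the boundary of the
  range of summation, which contributes the theta series of `J_{5,1}` (`hr_add_x`).

Sections are transferred between absolutely convergent families with equal sums by uniqueness of
power series coefficients (`dissect`). The hypothesis on `a` is an equation between `tsum`s, so
absolute convergence of `∑ a(n) q^n` has to be derived: divergence near the unit circle would make
`R̃(ζ,q)` vanish on an annulus, contrary to its constant term `1 + ζ` (`Adm.of_tsum_eq`). At `q = 0` the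
convention `q⁻¹ = 0` agrees with `X` having no constant term (`xTerm_zero`).
-/

/-- The q-Pochhammer symbol `(a;q)_∞ = ∏_{k≥0} (1 - a q^k)`. -/
noncomputable def qPochInf (a q : ℂ) : ℂ := ∏' k : ℕ, (1 - a * q ^ k)

/-- The Dyson rank of a partition: largest part minus number of parts. -/
noncomputable def partitionRank {n : ℕ} (p : n.Partition) : ℤ :=
  (p.parts.sup : ℤ) - p.parts.card

/-- The rank generating function `R(z;q) = Σ_{n≥0} Σ_m N(m,n) z^m q^n`. -/
noncomputable def rankGF (z q : ℂ) : ℂ :=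
  ∑' n : ℕ, (∑ p : n.Partition, z ^ partitionRank p) * q ^ n

/-- `Jba b a q` is `J_{b,a} = (q^a;q^b)_∞ (q^{b-a};q^b)_∞ (q^b;q^b)_∞`. -/
noncomputable def Jba (b a : ℕ) (q : ℂ) : ℂ :=
  qPochInf (q ^ a) (q ^ b) * qPochInf (q ^ (b - a)) (q ^ b) * qPochInf (q ^ b) (q ^ b)

/-- `Jb b q` is `J_b = (q^b;q^b)_∞`. -/
noncomputable def Jb (b : ℕ) (q : ℂ) : ℂ := qPochInf (q ^ b) (q ^ b)

/-- `ζ = exp(2πi/5)`. -/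
noncomputable def zeta5 : ℂ := Complex.exp (2 * Real.pi * Complex.I / 5)

/-- `R̃(z,q) = (1+z)(z²q;q)_∞ (z^{-2}q;q)_∞ (q;q)_∞ R(z;q)`. -/
noncomputable def rankGFtilde (z q : ℂ) : ℂ :=
  (1 + z) * qPochInf (z ^ 2 * q) q * qPochInf (z ^ (-2 : ℤ) * q) q * qPochInf q q *
    rankGF z q

open Filter Topology

/-! ### Infinite products and Euler's expansions -/

/-- The finite `q`-Pochhammer symbol `(a;q)_n`. -/
noncomputable def qp (a q : ℂ) (n : ℕ) : ℂ := ∏ i ∈ Finset.range n, (1 - a * q ^ i)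

theorem qp_zero (a q : ℂ) : qp a q 0 = 1 := by simp [qp]

theorem qp_succ (a q : ℂ) (n : ℕ) : qp a q (n + 1) = qp a q n * (1 - a * q ^ n) := by
  simp [qp, Finset.prod_range_succ]

theorem qp_succ' (a q : ℂ) (n : ℕ) : qp a q (n + 1) = (1 - a) * qp (a * q) q n := by
  simp only [qp, Finset.prod_range_succ', pow_zero, mul_one]
  rw [mul_comm]
  congr 1
  exact Finset.prod_congr rfl fun i _ => by ring

theorem qPoch_summable (a : ℂ) {q : ℂ} (hq : ‖q‖ < 1) :
    Summable (fun k : ℕ => ‖-(a * q ^ k)‖) := by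
  simp only [norm_neg, norm_mul, norm_pow]
  exact (summable_geometric_of_lt_one (norm_nonneg _) hq).mul_left _

theorem qPoch_multipliable (a : ℂ) {q : ℂ} (hq : ‖q‖ < 1) :
    Multipliable (fun k : ℕ => 1 - a * q ^ k) := by
  simpa [sub_eq_add_neg] using multipliable_one_add_of_summable (qPoch_summable a hq)

theorem qPochInf_split (a : ℂ) {q : ℂ} (hq : ‖q‖ < 1) (n : ℕ) :
    qPochInf a q = qp a q n * qPochInf (a * q ^ n) q := by
  induction n with
  | zero => simp [qp]
  | succ n ih =>
    rw [ih, qp_succ, mul_assoc]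
    congr 1
    unfold qPochInf
    have h2 := qPoch_multipliable (a * q ^ (n + 1)) hq
    rw [tprod_eq_zero_mul']
    · simp only [pow_zero, mul_one]
      congr 2
      ext k
      ring
    · refine h2.congr fun k => ?_
      ring

theorem qPochInf_succ (a : ℂ) {q : ℂ} (hq : ‖q‖ < 1) :
    qPochInf a q = (1 - a) * qPochInf (a * q) q := by
  simpa [qp] using qPochInf_split a hq 1

theorem qPochInf_ne_zero {a q : ℂ} (hq : ‖q‖ < 1) (h : ∀ k : ℕ, a * q ^ k ≠ 1) :
    qPochInf a q ≠ 0 := by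
  have := tprod_one_add_ne_zero_of_summable (f := fun k : ℕ => -(a * q ^ k))
    (fun k => by simpa [← sub_eq_add_neg, sub_ne_zero] using (h k).symm) (qPoch_summable a hq)
  simpa [qPochInf, sub_eq_add_neg] using this

theorem qp_ne_zero {a q : ℂ} (h : ∀ k : ℕ, a * q ^ k ≠ 1) (n : ℕ) : qp a q n ≠ 0 := by
  rw [qp, Finset.prod_ne_zero_iff]
  exact fun k _ => sub_ne_zero.2 (h k).symm

theorem qp_tendsto (a : ℂ) {q : ℂ} (hq : ‖q‖ < 1) :
    Tendsto (qp a q) atTop (𝓝 (qPochInf a q)) :=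
  (qPoch_multipliable a hq).tendsto_prod_tprod_nat

theorem qp_inv_bounded {a q : ℂ} (hq : ‖q‖ < 1) (h : ∀ k : ℕ, a * q ^ k ≠ 1) :
    ∃ C : ℝ, 0 < C ∧ ∀ n, ‖(qp a q n)⁻¹‖ ≤ C := by
  have h1 := (qp_tendsto a hq).inv₀ (qPochInf_ne_zero hq h)
  obtain ⟨C, hC⟩ := (Metric.isBounded_range_of_tendsto _ h1).exists_norm_le
  exact ⟨max C 1, by positivity, fun n => (hC _ ⟨n, rfl⟩).trans (le_max_left _ _)⟩

theorem mul_pow_ne_one {a q : ℂ} (ha : ‖a‖ < 1) (hq : ‖q‖ < 1) (k : ℕ) : a * q ^ k ≠ 1 := by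
  intro h
  have h1 : ‖a * q ^ k‖ = 1 := by rw [h]; simp
  rw [norm_mul, norm_pow] at h1
  have : ‖q‖ ^ k ≤ 1 := pow_le_one₀ (norm_nonneg _) hq.le
  nlinarith [norm_nonneg a, norm_nonneg q]

theorem summable_geom_choose (A : ℝ) (hA : 0 ≤ A) {r : ℝ} (hr : 0 ≤ r) (hr1 : r < 1) :
    Summable (fun n : ℕ => A ^ n * r ^ (n.choose 2)) := by
  have h0 : Tendsto (fun n : ℕ => A * r ^ n) atTop (𝓝 (A * 0)) :=
    (tendsto_pow_atTop_nhds_zero_of_lt_one hr hr1).const_mul A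
  rw [mul_zero] at h0
  refine summable_of_ratio_norm_eventually_le (r := 1 / 2) (by norm_num) ?_
  filter_upwards [h0.eventually_le_const (show (0 : ℝ) < 1 / 2 by norm_num)] with n hn
  have : A ^ (n + 1) * r ^ ((n + 1).choose 2) = (A * r ^ n) * (A ^ n * r ^ (n.choose 2)) := by
    rw [Nat.choose_succ_succ' n 1, Nat.choose_one_right]
    ring
  rw [this, norm_mul]
  gcongr
  rw [Real.norm_of_nonneg (by positivity)]
  exact hn

/-- A power series evaluated at `x q ^ n` tends to its constant term. -/
theorem powerSeries_tendsto (c : ℕ → ℂ) (x : ℂ) {q : ℂ} (hq : ‖q‖ < 1)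
    (hs : Summable fun k => ‖c k * x ^ k‖) :
    Tendsto (fun n : ℕ => ∑' k, c k * (x * q ^ n) ^ k) atTop (𝓝 (c 0)) := by
  have h := tendsto_tsum_of_dominated_convergence (𝓕 := atTop)
    (f := fun (n : ℕ) (k : ℕ) => c k * (x * q ^ n) ^ k) (g := fun k => if k = 0 then c 0 else 0)
    hs ?_ ?_
  · simpa using h
  · intro k
    have h1 : Tendsto (fun n : ℕ => x * q ^ n) atTop (𝓝 (x * 0)) :=
      (tendsto_pow_atTop_nhds_zero_of_norm_lt_one hq).const_mul x
    have h2 := (h1.pow k).const_mul (c k)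
    convert h2 using 2
    rcases eq_or_ne k 0 with rfl | hk <;> simp [*]
  · refine Eventually.of_forall fun n k => ?_
    simp only [norm_mul, norm_pow]
    gcongr
    have : ‖q‖ ^ n ≤ 1 := pow_le_one₀ (norm_nonneg _) hq.le
    nlinarith [norm_nonneg x]

/-- The coefficients of Euler's expansion of `(x;q)_∞`. -/
noncomputable def eulerC (q : ℂ) (k : ℕ) : ℂ := (-1) ^ k * q ^ (k.choose 2) * (qp q q k)⁻¹

theorem eulerC_succ {q : ℂ} (hq : ‖q‖ < 1) (k : ℕ) :
    eulerC q (k + 1) * (1 - q ^ (k + 1)) = - (q ^ k * eulerC q k) := by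
  have h := qp_ne_zero (mul_pow_ne_one hq hq)
  have h1 := h k
  have h2 := h (k + 1)
  have h3 : (1 - q * q ^ k) ≠ 0 := sub_ne_zero.2 (mul_pow_ne_one hq hq k).symm
  rw [eulerC, eulerC, Nat.choose_succ_succ' k 1, Nat.choose_one_right, qp_succ, pow_succ' q k]
  field_simp
  ring

theorem eulerC_summable (x : ℂ) {q : ℂ} (hq : ‖q‖ < 1) :
    Summable fun k => ‖eulerC q k * x ^ k‖ := by
  obtain ⟨C, hC0, hC⟩ := qp_inv_bounded hq (mul_pow_ne_one hq hq)
  refine Summable.of_nonneg_of_le (fun _ => norm_nonneg _) (fun k => ?_)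
    ((summable_geom_choose ‖x‖ (norm_nonneg _) (norm_nonneg q) hq).mul_left C)
  simp only [eulerC, norm_mul, norm_pow, norm_neg, norm_one, one_pow, one_mul]
  calc _ ≤ ‖q‖ ^ k.choose 2 * C * ‖x‖ ^ k := by gcongr; exact hC k
    _ = _ := by ring

/-- Euler: `(x;q)_∞ = ∑ (-1)^k q^{k(k-1)/2} x^k / (q;q)_k`. -/
theorem euler_one (x : ℂ) {q : ℂ} (hq : ‖q‖ < 1) :
    HasSum (fun k => eulerC q k * x ^ k) (qPochInf x q) := by
  have hs := fun x : ℂ => (eulerC_summable x hq).of_norm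
  have key : ∀ x : ℂ, ∑' k, eulerC q k * x ^ k = (1 - x) * ∑' k, eulerC q k * (x * q) ^ k := by
    intro x
    have h1 : ∑' k, eulerC q k * x ^ k - ∑' k, eulerC q k * (x * q) ^ k
        = - x * ∑' k, eulerC q k * (x * q) ^ k := by
      rw [← (hs x).tsum_sub (hs _), ← tsum_mul_left, Summable.tsum_eq_zero_add]
      · simp only [pow_zero, sub_self, zero_add]
        refine tsum_congr fun k => ?_
        have := eulerC_succ hq k
        linear_combination x ^ (k + 1) * this
      · exact (hs x).sub (hs _)
    linear_combination h1
  have it : ∀ n : ℕ, ∑' k, eulerC q k * x ^ k = qp x q n * ∑' k, eulerC q k * (x * q ^ n) ^ k := by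
    intro n
    induction n with
    | zero => simp [qp]
    | succ n ih => rw [ih, key, qp_succ, pow_succ]; ring_nf
  have hl := (qp_tendsto x hq).mul (powerSeries_tendsto (eulerC q) x hq (eulerC_summable x hq))
  have : qPochInf x q = ∑' k, eulerC q k * x ^ k := by
    have h2 := tendsto_nhds_unique (hl.congr fun n => (it n).symm) tendsto_const_nhds
    simpa [eulerC, qp] using h2
  rw [this]
  exact (hs x).hasSum

theorem euler_two_summable {x q : ℂ} (hx : ‖x‖ < 1) (hq : ‖q‖ < 1) :
    Summable fun k => ‖(qp q q k)⁻¹ * x ^ k‖ := by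
  obtain ⟨C, hC0, hC⟩ := qp_inv_bounded hq (mul_pow_ne_one hq hq)
  refine Summable.of_nonneg_of_le (fun _ => norm_nonneg _) (fun k => ?_)
    ((summable_geometric_of_lt_one (norm_nonneg x) hx).mul_left C)
  rw [norm_mul, norm_pow]
  gcongr
  exact hC k

/-- Euler: `1 / (x;q)_∞ = ∑ x^k / (q;q)_k` for `|x| < 1`. -/
theorem euler_two {x q : ℂ} (hx : ‖x‖ < 1) (hq : ‖q‖ < 1) :
    HasSum (fun k => (qp q q k)⁻¹ * x ^ k) (qPochInf x q)⁻¹ := by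
  have hn : ∀ n : ℕ, ‖x * q ^ n‖ < 1 := fun n => by
    rw [norm_mul, norm_pow]
    have : ‖q‖ ^ n ≤ 1 := pow_le_one₀ (norm_nonneg _) hq.le
    nlinarith [norm_nonneg x]
  have hs := fun (x : ℂ) (hx : ‖x‖ < 1) => (euler_two_summable hx hq).of_norm
  have key : ∀ x : ℂ, ‖x‖ < 1 → ‖x * q‖ < 1 →
      ∑' k, (qp q q k)⁻¹ * (x * q) ^ k = (1 - x) * ∑' k, (qp q q k)⁻¹ * x ^ k := by
    intro x hx hx1
    have h1 : ∑' k, (qp q q k)⁻¹ * x ^ k - ∑' k, (qp q q k)⁻¹ * (x * q) ^ k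
        = x * ∑' k, (qp q q k)⁻¹ * x ^ k := by
      rw [← (hs x hx).tsum_sub (hs _ hx1), ← tsum_mul_left, Summable.tsum_eq_zero_add]
      · simp only [pow_zero, sub_self, zero_add]
        refine tsum_congr fun k => ?_
        have h := qp_ne_zero (mul_pow_ne_one hq hq) k
        have h3 : (1 - q * q ^ k) ≠ 0 := sub_ne_zero.2 (mul_pow_ne_one hq hq k).symm
        rw [qp_succ]
        field_simp
        ring
      · exact (hs x hx).sub (hs _ hx1)
    linear_combination -h1
  have it : ∀ n : ℕ, ∑' k, (qp q q k)⁻¹ * (x * q ^ n) ^ k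
      = qp x q n * ∑' k, (qp q q k)⁻¹ * x ^ k := by
    intro n
    induction n with
    | zero => simp [qp]
    | succ n ih =>
      have h4 := key (x * q ^ n) (hn n) (by simpa [pow_succ, mul_assoc] using hn (n + 1))
      rw [pow_succ, ← mul_assoc, h4, ih, qp_succ]
      ring
  have hl := (qp_tendsto x hq).mul_const (∑' k, (qp q q k)⁻¹ * x ^ k)
  have h2 := tendsto_nhds_unique hl
    ((powerSeries_tendsto (fun k => (qp q q k)⁻¹) x hq (euler_two_summable hx hq)).congr it)
  rw [qp_zero, inv_one] at h2
  rw [← eq_inv_of_mul_eq_one_right h2]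
  exact (hs x hx).hasSum

/-! ### Jacobi's triple product -/

/-- The triangular number `k(k-1)/2`. -/
def tri (k : ℤ) : ℤ := k * (k - 1) / 2

theorem two_tri (k : ℤ) : 2 * tri k = k * (k - 1) := by
  have : (2 : ℤ) ∣ k * (k - 1) := (Int.even_mul_pred_self k).two_dvd
  rw [tri]; omega

theorem tri_natCast (n : ℕ) : tri n = (n.choose 2 : ℕ) := by
  have h := two_tri n
  have h2 := Nat.choose_two_right n
  have h3 : (2 : ℕ) ∣ n * (n - 1) := (Nat.even_mul_pred_self n).two_dvd
  have h4 : 2 * n.choose 2 = n * (n - 1) := by omega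
  have h5 : (2 : ℤ) * (n.choose 2 : ℕ) = n * (n - 1) := by
    rcases n with _ | n
    · simp
    · have : ((2 * (n + 1).choose 2 : ℕ) : ℤ) = ((n + 1) * n : ℕ) := by exact_mod_cast h4
      push_cast at this ⊢
      linarith
  linarith

theorem tri_neg (k : ℤ) : tri (-k) = tri k + k := by
  have h := two_tri k
  have h2 := two_tri (-k)
  linarith

/-- The general term `(-1)^k x^k q^{k(k-1)/2}` of the theta series. -/
noncomputable def thetaTerm (x q : ℂ) (k : ℤ) : ℂ := (-1) ^ k * x ^ k * q ^ tri k

theorem norm_neg_one_zpow (k : ℤ) : ‖(-1 : ℂ) ^ k‖ = 1 := by simp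

theorem thetaTerm_norm_summable {x q : ℂ} (hx : x ≠ 0) (hq0 : q ≠ 0) (hq : ‖q‖ < 1) :
    Summable fun k => ‖thetaTerm x q k‖ := by
  rw [summable_int_iff_summable_nat_and_neg]
  constructor
  · refine (summable_geom_choose ‖x‖ (norm_nonneg _) (norm_nonneg q) hq).congr fun n => ?_
    simp [thetaTerm, tri_natCast]
  · refine (summable_geom_choose (‖q‖ * ‖x‖⁻¹) (by positivity) (norm_nonneg q) hq).congr fun n => ?_
    rw [thetaTerm, tri_neg, tri_natCast, zpow_add₀ hq0]
    simp only [norm_mul, norm_zpow]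
    simp
    ring

theorem qPochInf_zpow_neg (q : ℂ) (hq : ‖q‖ < 1) (hq0 : q ≠ 0) (k : ℤ) (hk : k < 0) :
    qPochInf (q ^ (k + 1)) q = 0 := by
  obtain ⟨m, hm⟩ : ∃ m : ℕ, k + 1 = -(m : ℤ) := ⟨(-(k + 1)).toNat, by omega⟩
  rw [qPochInf_split _ hq (m + 1), qp_succ, hm]
  simp [hq0]

/-- The shear `(k, m) ↦ (k + m, m)`. -/
def shearEquiv : ℤ × ℕ ≃ ℤ × ℕ where
  toFun p := (p.1 + p.2, p.2)
  invFun p := (p.1 - p.2, p.2)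
  left_inv p := by simp
  right_inv p := by simp

theorem HasSum.of_eq {ι : Type*} {f g : ι → ℂ} {a : ℂ} (h : HasSum f a) (e : ∀ i, g i = f i) :
    HasSum g a := by
  rwa [show g = f from funext e]

theorem HasSum.mul_norm {ι κ : Type*} {f : ι → ℂ} {g : κ → ℂ} {a b : ℂ} (hf : HasSum f a)
    (hg : HasSum g b) (hf' : Summable fun i => ‖f i‖) (hg' : Summable fun i => ‖g i‖) :
    HasSum (fun p : ι × κ => f p.1 * g p.2) (a * b) :=
  hf.mul hg (summable_mul_of_summable_norm hf' hg')

theorem jt_shift {x q : ℂ} (hq0 : q ≠ 0) (hx0 : x ≠ 0) (k : ℤ) (m : ℕ) :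
    thetaTerm x q k * (eulerC q m * (q ^ (k + 1)) ^ m) =
      thetaTerm x q (k + m) * ((qp q q m)⁻¹ * (q / x) ^ m) := by
  have h1 : tri (k + m) + m = tri k + (m.choose 2 : ℕ) + (k + 1) * m := by
    have h1 := two_tri k
    have h2 := two_tri (k + m)
    have h3 := two_tri m
    rw [tri_natCast] at h3
    have : 2 * (tri (k + m) + m) = 2 * (tri k + (m.choose 2 : ℕ) + (k + 1) * m) := by
      linear_combination h2 - h1 - h3
    linarith
  have h2 : q ^ tri (k + m) * q ^ m = q ^ tri k * q ^ (m.choose 2) * (q ^ (k + 1)) ^ m := by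
    rw [← zpow_natCast q m, ← zpow_natCast q (m.choose 2), ← zpow_natCast (q ^ (k + 1)) m,
      ← zpow_mul, ← zpow_add₀ hq0, ← zpow_add₀ hq0, ← zpow_add₀ hq0, h1]
  simp only [thetaTerm, eulerC]
  rw [zpow_add₀ (show (-1 : ℂ) ≠ 0 by norm_num), zpow_add₀ hx0, zpow_natCast, zpow_natCast, div_pow]
  have hxm : x ^ m ≠ 0 := pow_ne_zero _ hx0
  calc _ = (-1) ^ k * x ^ k * (-1) ^ m * (qp q q m)⁻¹ *
        (q ^ tri k * q ^ (m.choose 2) * (q ^ (k + 1)) ^ m) := by ring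
    _ = _ := by rw [← h2]; field_simp

/-- **Jacobi's triple product**, in the range `|q| < |x|`. -/
theorem jacobi_triple {x q : ℂ} (hq0 : q ≠ 0) (hq : ‖q‖ < 1) (hx : ‖q‖ < ‖x‖) :
    HasSum (thetaTerm x q) (qPochInf x q * qPochInf (q / x) q * qPochInf q q) := by
  have hx0 : x ≠ 0 := norm_pos_iff.1 ((norm_nonneg _).trans_lt hx)
  have hqx : ‖q / x‖ < 1 := by
    rw [norm_div, div_lt_one (norm_pos_iff.2 hx0)]; exact hx
  have hth := thetaTerm_norm_summable hx0 hq0 hq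
  -- the double series `∑_{k,m} (-1)^k x^k q^{k(k-1)/2} (q/x)^m / (q;q)_m`
  have hg : HasSum (fun p : ℤ × ℕ => thetaTerm x q p.1 * ((qp q q p.2)⁻¹ * (q / x) ^ p.2))
      ((∑' k, thetaTerm x q k) * (qPochInf (q / x) q)⁻¹) :=
    HasSum.mul_norm (f := thetaTerm x q) (g := fun m => (qp q q m)⁻¹ * (q / x) ^ m)
      (Summable.of_norm hth).hasSum (euler_two hqx hq) hth (euler_two_summable hqx hq)
  have hg2 : HasSum (fun p : ℤ × ℕ => thetaTerm x q p.1 * (eulerC q p.2 * (q ^ (p.1 + 1)) ^ p.2))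
      ((∑' k, thetaTerm x q k) * (qPochInf (q / x) q)⁻¹) := by
    exact ((shearEquiv.hasSum_iff.2 hg)).of_eq fun p => jt_shift hq0 hx0 p.1 p.2
  have hf : ∀ k : ℤ, HasSum (fun m : ℕ => thetaTerm x q k * (eulerC q m * (q ^ (k + 1)) ^ m))
      (thetaTerm x q k * qPochInf (q ^ (k + 1)) q) := fun k => (euler_one _ hq).mul_left _
  have h3 := hg2.prod_fiberwise hf
  have h4 : HasSum (fun k : ℤ => thetaTerm x q k * qPochInf (q ^ (k + 1)) q)
      (qPochInf x q * qPochInf q q) := by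
    rw [← Function.Injective.hasSum_iff (f := fun k : ℤ => thetaTerm x q k *
      qPochInf (q ^ (k + 1)) q) (g := fun n : ℕ => (n : ℤ)) Nat.cast_injective]
    · refine ((euler_one x hq).mul_right (qPochInf q q)).of_eq fun n => ?_
      have h := qPochInf_split q hq n
      have h5 := qp_ne_zero (mul_pow_ne_one hq hq) n
      simp only [Function.comp, thetaTerm, tri_natCast, zpow_natCast, eulerC]
      rw [h, zpow_add₀ hq0, zpow_natCast, zpow_one, mul_comm (q ^ n) q]
      field_simp
    · intro k hk
      have : k < 0 := by
        by_contra h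
        exact hk ⟨k.toNat, by simp; omega⟩
      rw [qPochInf_zpow_neg q hq hq0 k this, mul_zero]
  have h6 := h3.unique h4
  have h7 : qPochInf (q / x) q ≠ 0 := qPochInf_ne_zero hq (mul_pow_ne_one hqx hq)
  have h8 : ∑' k, thetaTerm x q k = qPochInf x q * qPochInf (q / x) q * qPochInf q q := by
    field_simp at h6
    linear_combination h6
  rw [← h8]
  exact hth.of_norm.hasSum

/-! ### Theta series in one variable and the quintuple product -/

theorem neg_one_zpow_congr {m n : ℤ} (h : Even (m - n)) : (-1 : ℂ) ^ m = (-1) ^ n := by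
  rw [show m = (m - n) + n by ring, zpow_add₀ (by norm_num), h.neg_one_zpow, one_mul]

theorem neg_one_zpow_congr_neg {m n : ℤ} (h : Odd (m - n)) : (-1 : ℂ) ^ m = -(-1) ^ n := by
  rw [show m = (m - n) + n by ring, zpow_add₀ (by norm_num), h.neg_one_zpow, neg_one_mul]

/-- The term `(-1)^k q^{c k(k-1)/2 + a k}` of a theta series in one variable. -/
noncomputable def th1 (c a : ℕ) (q : ℂ) (k : ℤ) : ℂ := (-1) ^ k * q ^ (c * tri k + a * k)

theorem thetaTerm_pow {q : ℂ} (hq0 : q ≠ 0) (c a : ℕ) (k : ℤ) :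
    thetaTerm (q ^ a) (q ^ c) k = th1 c a q k := by
  rw [thetaTerm, th1, zpow_add₀ hq0, zpow_mul, zpow_mul, zpow_natCast, zpow_natCast]
  ring

theorem norm_pow_lt {q : ℂ} (hq : ‖q‖ < 1) {c : ℕ} (hc : 0 < c) : ‖q ^ c‖ < 1 := by
  rw [norm_pow]; exact pow_lt_one₀ (norm_nonneg _) hq hc.ne'

theorem th1_norm_summable {q : ℂ} (hq0 : q ≠ 0) (hq : ‖q‖ < 1) {c : ℕ} (hc : 0 < c) (a : ℕ) :
    Summable fun k => ‖th1 c a q k‖ :=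
  (thetaTerm_norm_summable (pow_ne_zero a hq0) (pow_ne_zero c hq0) (norm_pow_lt hq hc)).congr
    fun k => by rw [thetaTerm_pow hq0]

theorem th1_hasSum {q : ℂ} (hq0 : q ≠ 0) (hq : ‖q‖ < 1) {a b c : ℕ} (hb : 0 < b)
    (hc : a + b = c) : HasSum (th1 c a q)
      (qPochInf (q ^ a) (q ^ c) * qPochInf (q ^ b) (q ^ c) * qPochInf (q ^ c) (q ^ c)) := by
  have h : ‖q ^ c‖ < ‖q ^ a‖ := by
    rw [norm_pow, norm_pow]
    exact pow_lt_pow_right_of_lt_one₀ (norm_pos_iff.2 hq0) hq (by omega)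
  have h2 := jacobi_triple (pow_ne_zero c hq0) (norm_pow_lt hq (by omega)) h
  rw [show q ^ c / q ^ a = q ^ b by
    rw [div_eq_iff (pow_ne_zero _ hq0), ← pow_add]; congr 1; omega] at h2
  exact h2.of_eq fun k => (thetaTerm_pow hq0 c a k).symm

theorem qPochInf_three {q : ℂ} (hq : ‖q‖ < 1) :
    qPochInf q q = qPochInf (q ^ 2) (q ^ 3) * qPochInf (q ^ 1) (q ^ 3) *
      qPochInf (q ^ 3) (q ^ 3) := by
  have h3 := norm_pow_lt hq (show 0 < 3 by norm_num)
  have h1 : ∀ n, qp q q (3 * n) = qp (q ^ 2) (q ^ 3) n * qp (q ^ 1) (q ^ 3) n *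
      qp (q ^ 3) (q ^ 3) n := by
    intro n
    induction n with
    | zero => simp [qp]
    | succ n ih =>
      rw [show 3 * (n + 1) = 3 * n + 1 + 1 + 1 by ring, qp_succ, qp_succ, qp_succ, ih, qp_succ,
        qp_succ, qp_succ]
      ring
  have h2 : Tendsto (fun n : ℕ => 3 * n) atTop atTop :=
    tendsto_atTop_mono (fun n => by simp; omega) tendsto_id
  have h4 := (qp_tendsto q hq).comp h2
  have h5 := ((qp_tendsto (q ^ 2) h3).mul (qp_tendsto (q ^ 1) h3)).mul (qp_tendsto (q ^ 3) h3)
  exact tendsto_nhds_unique h4 (h5.congr fun n => (h1 n).symm)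

/-- Euler's pentagonal number theorem. -/
theorem pentagonal_hasSum {q : ℂ} (hq0 : q ≠ 0) (hq : ‖q‖ < 1) :
    HasSum (th1 3 2 q) (qPochInf q q) := by
  rw [qPochInf_three hq]
  exact th1_hasSum hq0 hq one_pos rfl

theorem tsum_split {ι κ μ : Type*} {i : ι → μ} {j : κ → μ} (hi : i.Injective) (hj : j.Injective)
    (hd : ∀ x y, i x ≠ j y) (hs : ∀ z, (∃ x, i x = z) ∨ ∃ y, j y = z) {f : μ → ℂ}
    (hf : Summable f) : ∑' z, f z = ∑' x, f (i x) + ∑' y, f (j y) := by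
  have hb : Function.Bijective (Sum.elim i j) := by
    refine ⟨hi.sumElim hj hd, fun z => ?_⟩
    rcases hs z with ⟨x, hx⟩ | ⟨y, hy⟩
    · exact ⟨Sum.inl x, hx⟩
    · exact ⟨Sum.inr y, hy⟩
  rw [← (Equiv.ofBijective _ hb).tsum_eq f]
  exact Summable.tsum_sum (hf.comp_injective hi) (hf.comp_injective hj)

theorem tsum_parity {f : ℤ × ℤ → ℂ} (hf : Summable f) :
    ∑' p, f p = ∑' p : ℤ × ℤ, f (p.2 + 2 * p.1, p.2) + ∑' p : ℤ × ℤ, f (p.2 + 2 * p.1 + 1, p.2) := by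
  refine tsum_split (i := fun p : ℤ × ℤ => (p.2 + 2 * p.1, p.2))
    (j := fun p : ℤ × ℤ => (p.2 + 2 * p.1 + 1, p.2)) ?_ ?_ ?_ ?_ hf
  · rintro ⟨a, b⟩ ⟨c, d⟩ h
    simp only [Prod.mk.injEq] at h ⊢
    omega
  · rintro ⟨a, b⟩ ⟨c, d⟩ h
    simp only [Prod.mk.injEq] at h ⊢
    omega
  · rintro ⟨a, b⟩ ⟨c, d⟩ h
    simp only [Prod.mk.injEq] at h
    omega
  · rintro ⟨a, b⟩
    rcases Int.even_or_odd' (a - b) with ⟨c, hc | hc⟩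
    · exact Or.inl ⟨(c, b), by simp; omega⟩
    · exact Or.inr ⟨(c, b), by simp; omega⟩

theorem th1_mul {q : ℂ} (hq0 : q ≠ 0) (c a d b : ℕ) (k l : ℤ) :
    th1 c a q k * th1 d b q l = (-1) ^ (k + l) * q ^ (c * tri k + a * k + (d * tri l + b * l)) := by
  rw [th1, th1, zpow_add₀ (show (-1 : ℂ) ≠ 0 by norm_num),
    zpow_add₀ hq0 (c * tri k + a * k)]
  ring

theorem th1_prod_hasSum {q : ℂ} (hq0 : q ≠ 0) (hq : ‖q‖ < 1) {c d : ℕ} (hc : 0 < c) (hd : 0 < d)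
    (a b : ℕ) {A B : ℂ} (hA : HasSum (th1 c a q) A) (hB : HasSum (th1 d b q) B) :
    HasSum (fun p : ℤ × ℤ => th1 c a q p.1 * th1 d b q p.2) (A * B) :=
  HasSum.mul_norm (f := th1 c a q) (g := th1 d b q) hA hB (th1_norm_summable hq0 hq hc a)
    (th1_norm_summable hq0 hq hd b)

theorem zpow_term_congr (q : ℂ) {s s' e e' : ℤ} (hs : Even (s - s')) (he : 2 * e = 2 * e') :
    (-1 : ℂ) ^ s * q ^ e = (-1) ^ s' * q ^ e' := by
  rw [neg_one_zpow_congr hs, show e = e' by omega]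

theorem zpow_term_congr_neg (q : ℂ) {s s' e e' : ℤ} (hs : Odd (s - s')) (he : 2 * e = 2 * e') :
    (-1 : ℂ) ^ s * q ^ e = -((-1) ^ s' * q ^ e') := by
  rw [neg_one_zpow_congr_neg hs, show e = e' by omega, neg_mul]

theorem tsum_reindex {ι κ : Type*} {σ : ι → κ} (hσ : σ.Bijective) {f : ι → ℂ} {g : κ → ℂ}
    (h : ∀ i, f i = g (σ i)) : ∑' i, f i = ∑' j, g j := by
  rw [← (Equiv.ofBijective σ hσ).tsum_eq g]
  exact tsum_congr h

/-- A case of the quintuple product identity: the theta series `∑ (-1)^l q^{(15l²+7l)/2}` minus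
`∑ (-1)^l q^{(15l²+13l+2)/2}` equals `J_5 J_{5,1} / J_{5,2}`. -/
theorem quintuple {q : ℂ} (hq0 : q ≠ 0) (hq : ‖q‖ < 1) {W₁ W₂ : ℂ}
    (h1 : HasSum (th1 15 11 q) W₁) (h2 : HasSum (th1 15 14 q) W₂) :
    Jba 5 2 q * (W₁ - q * W₂) = Jb 5 q * Jba 5 1 q := by
  have hA : HasSum (th1 5 3 q) (Jba 5 2 q) := by
    convert th1_hasSum (a := 3) (b := 2) hq0 hq two_pos rfl using 1
    simp only [Jba]; ring
  have hD : HasSum (th1 5 1 q) (Jba 5 1 q) := th1_hasSum (a := 1) (b := 4) hq0 hq (by norm_num) rfl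
  have hC : HasSum (th1 15 10 q) (Jb 5 q) := by
    refine (pentagonal_hasSum (pow_ne_zero 5 hq0) (norm_pow_lt hq (by norm_num))).of_eq fun k => ?_
    rw [th1, th1, ← zpow_natCast q 5, ← zpow_mul]
    congr 2
    push_cast; ring
  have f1 := th1_prod_hasSum hq0 hq (by norm_num) (by norm_num) _ _ hA h1
  have f2 := (th1_prod_hasSum hq0 hq (by norm_num) (by norm_num) _ _ hA h2).mul_left q
  have g := th1_prod_hasSum hq0 hq (by norm_num) (by norm_num) _ _ hC hD
  have f1' := f1.tsum_eq.symm.trans (tsum_parity f1.summable)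
  have f2' := f2.tsum_eq.symm.trans (tsum_parity f2.summable)
  have g' := g.tsum_eq.symm.trans (tsum_parity g.summable)
  simp only [th1_mul hq0] at f1' f2' g'
  have m2 : ∀ (s e : ℤ), q * ((-1) ^ s * q ^ e) = (-1) ^ s * q ^ (e + 1) := by
    intro s e; rw [zpow_add_one₀ hq0]; ring
  simp only [m2] at f2'
  have e1 : Function.Bijective (fun p : ℤ × ℤ => (p.2, p.1 - p.2)) :=
    Function.bijective_iff_has_inverse.2 ⟨fun p => (p.1 + p.2, p.1), fun p => by simp,
      fun p => by simp⟩
  have e2 : Function.Bijective (fun p : ℤ × ℤ => (-p.1 - p.2 - 1, 2 * p.2 + p.1 + 1)) :=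
    Function.bijective_iff_has_inverse.2 ⟨fun p => (-2 * p.1 - p.2 - 1, p.1 + p.2),
      fun p => by ext <;> simp <;> ring, fun p => by ext <;> simp <;> ring⟩
  have e3 : Function.Bijective (fun p : ℤ × ℤ => (-p.2 - p.1 - 1, p.1)) :=
    Function.bijective_iff_has_inverse.2 ⟨fun p => (p.2, -p.1 - p.2 - 1),
      fun p => by ext <;> simp <;> ring, fun p => by ext <;> simp <;> ring⟩
  rw [mul_sub, mul_left_comm, f1', f2', g']
  have k1 := fun F G h => tsum_reindex e1 (f := F) (g := G) h
  have k2 := fun F G h => tsum_reindex e2 (f := F) (g := G) h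
  have k3 := fun F G h => tsum_reindex e3 (f := F) (g := G) h
  have aux : ∀ a b c d e f : ℂ, a = e → c = -f → b = d → a + b - (c + d) = e + f := by
    intros a b c d e f h1 h2 h3; rw [h1, h2, h3]; ring
  apply aux
  · apply k1
    rintro ⟨u, l⟩
    apply zpow_term_congr
    · exact ⟨l, by ring⟩
    · push_cast
      linear_combination 5 * two_tri (l + 2 * u) + 15 * two_tri l - 15 * two_tri (u - l + 2 * l) -
        5 * two_tri (u - l)
  · rw [← tsum_neg]
    apply k2
    rintro ⟨u, l⟩
    apply zpow_term_congr_neg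
    · exact ⟨u - 1, by ring⟩
    · push_cast
      linear_combination 5 * two_tri (l + 2 * u) + 15 * two_tri l
        - 15 * two_tri (2 * l + u + 1 + 2 * (-u - l - 1) + 1) - 5 * two_tri (2 * l + u + 1)
  · apply k3
    rintro ⟨u, l⟩
    apply zpow_term_congr
    · exact ⟨2 * l + u + 1, by ring⟩
    · push_cast
      linear_combination 5 * two_tri (l + 2 * u + 1) + 15 * two_tri l
        - 5 * two_tri (u + 2 * (-l - u - 1) + 1) - 15 * two_tri u

/-! ### Partitions sorted by largest part -/

/-- Multisets of integers from `{1, …, N}`, i.e. partitions with all parts at most `N`. -/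
abbrev BM (N : ℕ) : Type := {s : Multiset ℕ // ∀ x ∈ s, 0 < x ∧ x ≤ N}

/-- Adjoining `k` copies of the part `N + 1`. -/
def bmStep (N : ℕ) (p : BM N × ℕ) : BM (N + 1) :=
  ⟨p.1.1 + Multiset.replicate p.2 (N + 1), fun x hx => by
    rcases Multiset.mem_add.1 hx with h | h
    · have := p.1.2 x h; omega
    · have := Multiset.eq_of_mem_replicate h; omega⟩

theorem bmStep_bijective (N : ℕ) : (bmStep N).Bijective := by
  constructor
  · rintro ⟨⟨s, hs⟩, k⟩ ⟨⟨t, ht⟩, l⟩ h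
    have h1 : s + Multiset.replicate k (N + 1) = t + Multiset.replicate l (N + 1) :=
      congrArg Subtype.val h
    have hs' : N + 1 ∉ s := fun h => by have := hs _ h; omega
    have ht' : N + 1 ∉ t := fun h => by have := ht _ h; omega
    have h2 := congrArg (Multiset.count (N + 1)) h1
    simp [Multiset.count_eq_zero_of_notMem, hs', ht'] at h2
    subst h2
    simpa using h1
  · rintro ⟨t, ht⟩
    refine ⟨(⟨t.filter (· ≤ N), fun x hx => ?_⟩, t.count (N + 1)), ?_⟩
    · rw [Multiset.mem_filter] at hx
      exact ⟨(ht x hx.1).1, hx.2⟩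
    · apply Subtype.ext
      simp only [bmStep]
      conv_rhs => rw [← Multiset.filter_add_not (· ≤ N) t]
      rw [← Multiset.filter_eq']
      congr 1
      apply Multiset.filter_congr
      intro x hx
      have := ht x hx
      omega

/-- Partitions with parts at most `N`, counted by number of parts and size: `1 / (wq;q)_N`. -/
theorem bm_hasSum {w q : ℂ} (hwq : ‖w * q‖ < 1) (hq : ‖q‖ < 1) (N : ℕ) :
    (Summable fun s : BM N => ‖w ^ s.1.card * q ^ s.1.sum‖) ∧
      HasSum (fun s : BM N => w ^ s.1.card * q ^ s.1.sum) (qp (w * q) q N)⁻¹ := by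
  induction N with
  | zero =>
    have h0 : ∀ s : BM 0, s = ⟨0, by simp⟩ := by
      rintro ⟨s, hs⟩
      apply Subtype.ext
      refine Multiset.eq_zero_of_forall_notMem fun x hx => ?_
      have := hs x hx; omega
    have : Unique (BM 0) := ⟨⟨⟨0, by simp⟩⟩, h0⟩
    refine ⟨Summable.of_finite, ?_⟩
    convert hasSum_unique _
    rw [h0 default]
    simp [qp_zero]
  | succ N ih =>
    have hN : ‖w * q * q ^ N‖ < 1 := by
      rw [norm_mul, norm_pow]
      exact (mul_le_of_le_one_right (norm_nonneg _)
        (pow_le_one₀ (norm_nonneg _) hq.le)).trans_lt hwq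
    have hg := hasSum_geometric_of_norm_lt_one hN
    have hgn : Summable fun k : ℕ => ‖(w * q * q ^ N) ^ k‖ :=
      summable_norm_geometric_of_norm_lt_one hN
    have e : ∀ p : BM N × ℕ, w ^ (bmStep N p).1.card * q ^ (bmStep N p).1.sum =
        (w ^ p.1.1.card * q ^ p.1.1.sum) * (w * q * q ^ N) ^ p.2 := by
      rintro ⟨s, k⟩
      simp only [bmStep, Multiset.card_add, Multiset.card_replicate, Multiset.sum_add,
        Multiset.sum_replicate, smul_eq_mul]
      ring
    constructor
    · rw [← (Equiv.ofBijective _ (bmStep_bijective N)).summable_iff]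
      refine (Summable.mul_norm (f := fun s : BM N => w ^ s.1.card * q ^ s.1.sum) ih.1 hgn).congr
        fun p => ?_
      rw [← e p]
      rfl
    · rw [← (Equiv.ofBijective _ (bmStep_bijective N)).hasSum_iff, qp_succ, mul_inv]
      exact (HasSum.mul_norm (f := fun s : BM N => w ^ s.1.card * q ^ s.1.sum) ih.2 hg ih.1
        hgn).of_eq e

/-- Nonempty partitions correspond to a largest part `N + 1` together with the remaining parts,
all at most `N + 1`. -/
def toPartition : Option (Σ N : ℕ, BM (N + 1)) → Σ n : ℕ, n.Partition
  | none => ⟨0, ⟨0, by simp, by simp⟩⟩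
  | some x => ⟨x.1 + 1 + x.2.1.sum, ⟨(x.1 + 1) ::ₘ x.2.1, fun {i} hi => by
      rcases Multiset.mem_cons.1 hi with h | h
      · omega
      · exact (x.2.2 i h).1, by simp⟩⟩

theorem parts_injective {x y : Σ n : ℕ, n.Partition} (h : x.2.parts = y.2.parts) : x = y := by
  obtain ⟨n, p⟩ := x
  obtain ⟨m, r⟩ := y
  have h1 : n = m := by rw [← p.parts_sum, ← r.parts_sum]; exact congrArg _ h
  subst h1
  congr 1
  exact Nat.Partition.ext h

theorem toPartition_sup (x : Σ N : ℕ, BM (N + 1)) :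
    (toPartition (some x)).2.parts.sup = x.1 + 1 := by
  simp only [toPartition, Multiset.sup_cons]
  exact sup_eq_left.2 (Multiset.sup_le.2 fun b hb => (x.2.2 b hb).2)

theorem toPartition_bijective : toPartition.Bijective := by
  constructor
  · rintro (_ | x) (_ | y) h
    · rfl
    · have := congrArg (fun u => u.2.parts) h
      simp [toPartition] at this
    · have := congrArg (fun u => u.2.parts) h
      simp [toPartition] at this
    · have h1 : x.1 = y.1 := by
        have := congrArg (fun u => u.2.parts.sup) h
        simp only [toPartition_sup] at this
        omega
      have h2 := congrArg (fun u => u.2.parts) h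
      obtain ⟨N, s⟩ := x
      obtain ⟨M, t⟩ := y
      simp only at h1
      subst h1
      simp only [toPartition, Multiset.cons_inj_right] at h2
      rw [Subtype.ext h2]
  · rintro ⟨n, p⟩
    rcases eq_or_ne p.parts 0 with h | h
    · exact ⟨none, parts_injective (by simp [toPartition, h])⟩
    · obtain ⟨m, hm, hmax⟩ : ∃ m ∈ p.parts, ∀ x ∈ p.parts, x ≤ m := by
        obtain ⟨x, hx⟩ := Multiset.exists_mem_of_ne_zero h
        obtain ⟨m, hm, hm'⟩ := p.parts.toFinset.exists_max_image id ⟨x, by simpa using hx⟩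
        exact ⟨m, by simpa using hm, fun x hx => hm' x (by simpa using hx)⟩
      have hpos := p.parts_pos hm
      obtain ⟨N, rfl⟩ : ∃ N, m = N + 1 := ⟨m - 1, by omega⟩
      refine ⟨some ⟨N, ⟨p.parts.erase (N + 1), fun x hx => ?_⟩⟩, parts_injective ?_⟩
      · have := Multiset.mem_of_mem_erase hx
        exact ⟨p.parts_pos this, hmax x this⟩
      · simp only [toPartition]
        exact Multiset.cons_erase hm

/-- The general term `z^{rank p} q^n` of the rank generating function. -/
noncomputable def rankTerm (z q : ℂ) (x : Σ n : ℕ, n.Partition) : ℂ :=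
  z ^ partitionRank x.2 * q ^ x.1

theorem rankTerm_some {z : ℂ} (hz : z ≠ 0) (q : ℂ) (x : Σ N : ℕ, BM (N + 1)) :
    rankTerm z q (toPartition (some x)) =
      z ^ x.1 * q ^ (x.1 + 1) * (z⁻¹ ^ x.2.1.card * q ^ x.2.1.sum) := by
  rw [rankTerm, partitionRank, toPartition_sup]
  simp only [toPartition, Multiset.card_cons]
  rw [show ((x.1 + 1 : ℕ) : ℤ) - ((x.2.1.card + 1 : ℕ) : ℤ) = x.1 - x.2.1.card by push_cast; ring,
    zpow_sub₀ hz, zpow_natCast, zpow_natCast, pow_add, inv_pow]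
  field_simp

theorem rank_summable_aux {z q : ℂ} (hz : z ≠ 0) (hq : ‖q‖ < 1) (h1 : ‖z * q‖ < 1)
    (h2 : ‖z⁻¹ * q‖ < 1) :
    Summable fun x : Σ N : ℕ, BM (N + 1) => ‖rankTerm z q (toPartition (some x))‖ := by
  have hq' : ‖((‖q‖ : ℝ) : ℂ)‖ < 1 := by simpa using hq
  have h2' : ‖((‖z⁻¹‖ : ℝ) : ℂ) * ((‖q‖ : ℝ) : ℂ)‖ < 1 := by simpa using h2
  have hs : ∀ N, HasSum (fun s : BM (N + 1) => ((‖z⁻¹ ^ s.1.card * q ^ s.1.sum‖ : ℝ) : ℂ))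
      (qp (((‖z⁻¹‖ : ℝ) : ℂ) * ((‖q‖ : ℝ) : ℂ)) ((‖q‖ : ℝ) : ℂ) (N + 1))⁻¹ := fun N =>
    ((bm_hasSum h2' hq' (N + 1)).2).of_eq fun s => by simp
  obtain ⟨C, hC0, hC⟩ := qp_inv_bounded hq' (mul_pow_ne_one h2' hq')
  have hle : ∀ N, ∑' s : BM (N + 1), ‖z⁻¹ ^ s.1.card * q ^ s.1.sum‖ ≤ C := by
    intro N
    have e := (hs N).tsum_eq
    rw [← Complex.ofReal_tsum] at e
    have := hC (N + 1)
    rw [← e, Complex.norm_real, Real.norm_eq_abs] at this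
    exact (le_abs_self _).trans this
  rw [summable_sigma_of_nonneg fun _ => norm_nonneg _]
  simp only [rankTerm_some hz]
  constructor
  · intro N
    simp only [norm_mul (z ^ N * q ^ (N + 1))]
    exact (bm_hasSum h2 hq (N + 1)).1.mul_left _
  · have hg : Summable fun N : ℕ => C * ‖q‖ * ‖z * q‖ ^ N :=
      (summable_geometric_of_lt_one (norm_nonneg _) h1).mul_left _
    refine Summable.of_nonneg_of_le (fun N => tsum_nonneg fun _ => norm_nonneg _) (fun N => ?_) hg
    simp only [norm_mul (z ^ N * q ^ (N + 1))]
    rw [tsum_mul_left]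
    calc _ ≤ ‖z ^ N * q ^ (N + 1)‖ * C := by gcongr; exact hle N
      _ = _ := by simp only [norm_mul, norm_pow]; ring

theorem rankTerm_norm_summable {z q : ℂ} (hz : z ≠ 0) (hq : ‖q‖ < 1) (h1 : ‖z * q‖ < 1)
    (h2 : ‖z⁻¹ * q‖ < 1) : Summable fun x => ‖rankTerm z q x‖ := by
  rw [← (Equiv.ofBijective _ toPartition_bijective).summable_iff,
    ← (Equiv.optionEquivSumPUnit.{0} _).symm.summable_iff]
  exact Summable.sum _ (rank_summable_aux hz hq h1 h2) Summable.of_finite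

theorem rankGF_hasSum {z q : ℂ} (hz : z ≠ 0) (hq : ‖q‖ < 1) (h1 : ‖z * q‖ < 1)
    (h2 : ‖z⁻¹ * q‖ < 1) : HasSum (rankTerm z q) (rankGF z q) := by
  have hs := (rankTerm_norm_summable hz hq h1 h2).of_norm
  have h3 := hs.hasSum.sigma (g := fun n => (∑ p : n.Partition, z ^ partitionRank p) * q ^ n)
    fun n => by
      rw [Finset.sum_mul]
      exact hasSum_fintype _
  rw [rankGF, h3.tsum_eq]
  exact hs.hasSum

/-- The Fine-type expansion of the rank generating function, sorting partitions by their largest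
part. -/
theorem rankGF_eq {z q : ℂ} (hz : z ≠ 0) (hq : ‖q‖ < 1) (h1 : ‖z * q‖ < 1)
    (h2 : ‖z⁻¹ * q‖ < 1) :
    HasSum (fun N => z ^ N * q ^ (N + 1) * (qp (z⁻¹ * q) q (N + 1))⁻¹) (rankGF z q - 1) := by
  have h3 := rankGF_hasSum hz hq h1 h2
  rw [← (Equiv.ofBijective _ toPartition_bijective).hasSum_iff,
    ← (Equiv.optionEquivSumPUnit.{0} _).symm.hasSum_iff] at h3
  have ha := (rank_summable_aux hz hq h1 h2).of_norm.hasSum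
  have hb : HasSum (fun _ : PUnit.{1} => rankTerm z q (toPartition none)) 1 := by
    have : rankTerm z q (toPartition none) = 1 := by simp [rankTerm, toPartition, partitionRank]
    rw [this]
    exact hasSum_unique _
  have h4 := h3.unique (HasSum.sum ha hb)
  rw [h4, add_sub_cancel_right]
  refine ha.sigma fun N => ?_
  simp only [rankTerm_some hz]
  exact (bm_hasSum h2 hq (N + 1)).2.mul_left _

/-! ### Functional equation of the rank generating function -/

/-- Fine's functional equation `(1 - t) F(b; t) = 1 - b + b F(b; tq)` for
`F(b; t) = ∑ t^n / (bq; q)_n`. -/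
theorem fine_step {b t q A B : ℂ} (h : ∀ k : ℕ, b * q * q ^ k ≠ 1)
    (hA : HasSum (fun n => t ^ n * (qp (b * q) q n)⁻¹) A)
    (hB : HasSum (fun n => (t * q) ^ n * (qp (b * q) q n)⁻¹) B) :
    (1 - t) * A = 1 - b + b * B := by
  have h1 := hA.sub (hB.mul_left b)
  rw [hasSum_nat_add_iff' 1 |>.symm] at h1
  have h2 := hA.mul_left t
  have h3 : HasSum (fun n => t * (t ^ n * (qp (b * q) q n)⁻¹))
      (A - b * B - ∑ i ∈ Finset.range 1, (t ^ i * (qp (b * q) q i)⁻¹ -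
        b * ((t * q) ^ i * (qp (b * q) q i)⁻¹))) := by
    refine h1.of_eq fun n => ?_
    have h4 : 1 - b * q * q ^ n ≠ 0 := sub_ne_zero.2 (h n).symm
    have h5 := qp_ne_zero h n
    rw [qp_succ]
    field_simp
    ring
  have h6 := h2.unique h3
  simp [qp_zero] at h6
  linear_combination -h6

/-- Fine's equation with `b = z⁻¹`, `t = zq`: at `t` the series is `rankGF_eq` at `z`, at `tq` it is the one
at `zq`. -/
theorem rankGF_step {z q : ℂ} (hq0 : q ≠ 0) (hz : 1 < ‖z‖) (hzq : ‖z * q‖ < 1) :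
    rankGF (z * q) q * (z - 1) =
      (z - 1) * (1 - z * q) * (1 - z ^ 2 * q) + (1 - z * q) * z ^ 3 * q * rankGF z q := by
  have hz0 : z ≠ 0 := norm_pos_iff.1 (by linarith)
  have hz1 : z - 1 ≠ 0 := by
    intro h; rw [sub_eq_zero] at h; simp [h] at hz
  have hq : ‖q‖ < 1 := by
    rw [norm_mul] at hzq; nlinarith [norm_nonneg q]
  have hzi : ‖z⁻¹‖ < 1 := by rw [norm_inv]; exact inv_lt_one_of_one_lt₀ hz
  have hw : ‖z⁻¹ * q‖ < 1 := by
    rw [norm_mul]; nlinarith [norm_nonneg q, norm_nonneg z⁻¹]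
  have h1 := rankGF_eq hz0 hq hzq hw
  have hzqq : ‖z * q * q‖ < 1 := by
    rw [norm_mul]; nlinarith [norm_nonneg q, norm_nonneg (z * q)]
  have hi : (z * q)⁻¹ * q = z⁻¹ := by field_simp
  have h2 := rankGF_eq (mul_ne_zero hz0 hq0) hq hzqq (by rwa [hi])
  rw [hi] at h2
  have hne := mul_pow_ne_one hw hq
  have hA : HasSum (fun n => (z * q) ^ n * (qp (z⁻¹ * q) q n)⁻¹) (1 + z * (rankGF z q - 1)) := by
    rw [← hasSum_nat_add_iff' 1]
    have e : 1 + z * (rankGF z q - 1) -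
        ∑ i ∈ Finset.range 1, (z * q) ^ i * (qp (z⁻¹ * q) q i)⁻¹ = z * (rankGF z q - 1) := by
      simp [qp_zero]
    rw [e]
    refine (h1.mul_left z).of_eq fun n => ?_
    rw [mul_pow, pow_succ]; ring
  have hB : HasSum (fun n => (z * q * q) ^ n * (qp (z⁻¹ * q) q n)⁻¹)
      (q⁻¹ * (1 - z⁻¹) * (rankGF (z * q) q - 1)) := by
    refine (h2.mul_left (q⁻¹ * (1 - z⁻¹))).of_eq fun n => ?_
    have h4 : 1 - z⁻¹ ≠ 0 := by
      intro h; rw [sub_eq_zero] at h; rw [← h] at hzi; simp at hzi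
    have h5 := qp_ne_zero hne n
    rw [qp_succ', mul_pow, mul_inv]
    field_simp
    ring
  have h3 := fine_step hne hA hB
  field_simp at h3
  linear_combination -h3

theorem qPochInf_step2 (a : ℂ) {q : ℂ} (hq : ‖q‖ < 1) :
    qPochInf a q = (1 - a) * (1 - a * q) * qPochInf (a * q * q) q := by
  rw [qPochInf_succ a hq, qPochInf_succ (a * q) hq]; ring

theorem rankGFtilde_step {z q : ℂ} (hq0 : q ≠ 0) (hz : 1 < ‖z‖) (hzq : ‖z * q‖ < 1) :
    rankGFtilde (z * q) q + z⁻¹ * rankGFtilde z q = (z ^ 4)⁻¹ * q⁻¹ * (1 - z ^ 2 * q) *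
      (qPochInf (z ^ 2) q * qPochInf (q / z ^ 2) q * qPochInf q q) := by
  have hz0 : z ≠ 0 := norm_pos_iff.1 (by linarith)
  have hq : ‖q‖ < 1 := by
    rw [norm_mul] at hzq; nlinarith [norm_nonneg q]
  have h1 := rankGF_step hq0 hz hzq
  have hzq1 : 1 - z * q ≠ 0 := by
    intro h; rw [sub_eq_zero] at h; rw [← h] at hzq; simp at hzq
  have a1 : qPochInf (z ^ 2 * q) q =
      (1 - z ^ 2 * q) * (1 - z ^ 2 * q * q) * qPochInf ((z * q) ^ 2 * q) q := by
    rw [qPochInf_step2 _ hq]; congr 2; ring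
  have a2 : qPochInf ((z * q) ^ (-2 : ℤ) * q) q =
      (1 - (z ^ 2 * q)⁻¹) * (1 - (z ^ 2)⁻¹) * qPochInf (q / z ^ 2) q := by
    have e1 : (z * q) ^ (-2 : ℤ) * q = (z ^ 2 * q)⁻¹ := by
      rw [zpow_neg, zpow_ofNat]; field_simp
    have e2 : (z ^ 2 * q)⁻¹ * q = (z ^ 2)⁻¹ := by field_simp
    rw [qPochInf_step2 _ hq, e1, e2, inv_mul_eq_div]
  have a3 : z ^ (-2 : ℤ) * q = q / z ^ 2 := by
    rw [zpow_neg, zpow_ofNat]; field_simp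
  rw [rankGFtilde, rankGFtilde, a2, a3, qPochInf_succ (z ^ 2) hq, a1]
  apply mul_left_cancel₀ hzq1
  generalize qPochInf ((z * q) ^ 2 * q) q = X at *
  generalize qPochInf (q / z ^ 2) q = Y at *
  generalize qPochInf q q = Q at *
  generalize rankGF (z * q) q = R1 at *
  generalize rankGF z q = R at *
  linear_combination (norm := skip) (-(1 - z * q) * X * Y * Q * (1 - z ^ 2 * q) * (1 + z * q) *
    (1 + z) * (z ^ 4)⁻¹ * q⁻¹) * h1
  field_simp
  ring

theorem rankGF_one {q : ℂ} (hq : ‖q‖ < 1) : rankGF 1 q = (qPochInf q q)⁻¹ := by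
  have h1 := rankGF_eq one_ne_zero hq (by simpa using hq) (by simpa using hq)
  have h2 := euler_two hq hq
  rw [← hasSum_nat_add_iff' 1] at h2
  have h3 := h1.unique (h2.of_eq fun n => by simp; ring)
  simpa [qp_zero] using h3

theorem rankGFtilde_one {q : ℂ} (hq : ‖q‖ < 1) : rankGFtilde 1 q = 2 * qPochInf q q ^ 2 := by
  have := qPochInf_ne_zero hq (mul_pow_ne_one hq hq)
  rw [rankGFtilde, rankGF_one hq]
  simp
  field_simp
  ring

/-! ### Laurent coefficients on an annulus -/

/-- Coefficient extraction: integrating `S(z) z^{-m-1}` over the circle of radius `ρ` sums the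
coefficients of all terms of degree `m`. -/
theorem hasSum_coef {ι : Type*} [Countable ι] {c : ι → ℂ} {E : ι → ℤ} {ρ : ℝ} (hρ : 0 < ρ)
    (hs : Summable fun i => ‖c i‖ * ρ ^ E i) {S : ℂ → ℂ}
    (hS : ∀ z, ‖z‖ = ρ → HasSum (fun i => c i * z ^ E i) (S z)) (m : ℤ) :
    HasSum (fun i => if E i = m then c i else 0)
      ((2 * Real.pi * Complex.I)⁻¹ * circleIntegral (fun z => z ^ (-m - 1) * S z) 0 ρ) := by
  have hn : ∀ θ : ℝ, ‖circleMap 0 ρ θ‖ = ρ := fun θ => by simp [abs_of_pos hρ]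
  have hne : ∀ θ : ℝ, circleMap 0 ρ θ ≠ 0 := fun θ => circleMap_ne_center hρ.ne'
  have hc : ∀ k : ℤ, Continuous fun θ : ℝ => circleMap 0 ρ θ ^ k := fun k =>
    (continuous_circleMap 0 ρ).zpow₀ k fun θ => Or.inl (hne θ)
  have h1 : HasSum (fun i => circleIntegral (fun z => z ^ (-m - 1) * (c i * z ^ E i)) 0 ρ)
      (circleIntegral (fun z => z ^ (-m - 1) * S z) 0 ρ) := by
    unfold circleIntegral
    refine intervalIntegral.hasSum_integral_of_dominated_convergence
      (fun i _ => ρ * (ρ ^ (-m - 1) * (‖c i‖ * ρ ^ E i))) (fun i => ?_) (fun i => ?_) ?_ ?_ ?_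
    · refine Continuous.aestronglyMeasurable ?_
      simp only [deriv_circleMap]
      exact ((continuous_circleMap 0 ρ).mul continuous_const).smul
        ((hc _).mul (continuous_const.mul (hc _)))
    · refine Filter.Eventually.of_forall fun θ _ => ?_
      simp only [deriv_circleMap, smul_eq_mul, norm_mul, norm_zpow, hn, Complex.norm_I, mul_one]
      exact le_refl _
    · exact Filter.Eventually.of_forall fun θ _ => (hs.mul_left _).mul_left _
    · exact intervalIntegrable_const
    · refine Filter.Eventually.of_forall fun θ _ => ?_
      exact ((hS _ (hn θ)).mul_left _).const_smul _
  refine (h1.mul_left (2 * Real.pi * Complex.I)⁻¹).of_eq fun i => ?_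
  have h2 : circleIntegral (fun z => z ^ (-m - 1) * (c i * z ^ E i)) 0 ρ =
      c i * circleIntegral (fun z => (z - 0) ^ (E i - m - 1)) 0 ρ := by
    rw [← smul_eq_mul (c i), ← circleIntegral.integral_smul]
    refine circleIntegral.integral_congr hρ.le fun z hz => ?_
    have hz0 : z ≠ 0 := by
      rintro rfl
      simp at hz
      exact hρ.ne hz
    simp only [smul_eq_mul, sub_zero]
    rw [show E i - m - 1 = (-m - 1) + E i by ring, zpow_add₀ hz0]
    ring
  rw [h2]
  split_ifs with h
  · rw [show E i - m - 1 = -1 by omega]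
    simp only [zpow_neg_one]
    rw [circleIntegral.integral_sub_center_inv 0 hρ.ne']
    have := Complex.two_pi_I_ne_zero
    field_simp
  · rw [circleIntegral.integral_sub_zpow_of_ne (by omega)]
    simp

/-- Two families of monomials with the same sum on a circle have the same total coefficient in
each degree. -/
theorem coef_unique {ι κ : Type*} [Countable ι] [Countable κ] {c : ι → ℂ} {E : ι → ℤ} {d : κ → ℂ}
    {F : κ → ℤ} {ρ : ℝ} (hρ : 0 < ρ) (hc : Summable fun i => ‖c i‖ * ρ ^ E i)
    (hd : Summable fun j => ‖d j‖ * ρ ^ F j) {S : ℂ → ℂ}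
    (hcS : ∀ z, ‖z‖ = ρ → HasSum (fun i => c i * z ^ E i) (S z))
    (hdS : ∀ z, ‖z‖ = ρ → HasSum (fun j => d j * z ^ F j) (S z)) (m : ℤ) :
    ∑' i, (if E i = m then c i else 0) = ∑' j, (if F j = m then d j else 0) := by
  rw [(hasSum_coef hρ hc hcS m).tsum_eq, (hasSum_coef hρ hd hdS m).tsum_eq]

/-- `f` is given on `A` by an absolutely convergent Laurent series. -/
def Lau (A : Set ℂ) (f : ℂ → ℂ) : Prop :=
  ∃ d : ℤ → ℂ, ∀ z ∈ A, (Summable fun m => ‖d m * z ^ m‖) ∧ HasSum (fun m => d m * z ^ m) (f z)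

theorem Lau.of_family {A : Set ℂ} {f : ℂ → ℂ} {ι : Type*} (c : ι → ℂ) (E : ι → ℤ)
    (h : ∀ z ∈ A, (Summable fun i => ‖c i * z ^ E i‖) ∧ HasSum (fun i => c i * z ^ E i) (f z)) :
    Lau A f := by
  refine ⟨fun m => ∑' i : {i // E i = m}, c i, fun z hz => ?_⟩
  obtain ⟨h1, h2⟩ := h z hz
  have e : ∀ m (i : {i // E i = m}), c i * z ^ E i = c i * z ^ m := fun m i => by rw [i.2]
  have h3 := h1
  rw [← (Equiv.sigmaFiberEquiv E).summable_iff] at h3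
  have h4 := h2
  rw [← (Equiv.sigmaFiberEquiv E).hasSum_iff] at h4
  have h5 : ∀ m, (∑' i : {i // E i = m}, c i) * z ^ m = ∑' i : {i // E i = m}, c i * z ^ E i :=
    fun m => by rw [← tsum_mul_right]; exact tsum_congr fun i => (e m i).symm
  constructor
  · refine Summable.of_nonneg_of_le (fun _ => norm_nonneg _) (fun m => ?_) h3.sigma
    rw [h5]
    exact norm_tsum_le_tsum_norm (h3.sigma_factor m)
  · refine (h4.sigma fun m => (h4.summable.sigma_factor m).hasSum).of_eq fun m => ?_
    rw [h5]
    rfl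

theorem Lau.mul {A : Set ℂ} {f g : ℂ → ℂ} (hA : ∀ z ∈ A, z ≠ 0) (hf : Lau A f) (hg : Lau A g) :
    Lau A (fun z => f z * g z) := by
  obtain ⟨c, hc⟩ := hf
  obtain ⟨d, hd⟩ := hg
  have e : ∀ z ∈ A, ∀ p : ℤ × ℤ, c p.1 * d p.2 * z ^ (p.1 + p.2) =
      (c p.1 * z ^ p.1) * (d p.2 * z ^ p.2) := fun z hz p => by
    rw [zpow_add₀ (hA z hz)]; ring
  refine Lau.of_family (fun p : ℤ × ℤ => c p.1 * d p.2) (fun p => p.1 + p.2) fun z hz => ?_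
  constructor
  · simp only [e z hz]
    exact Summable.mul_norm (f := fun m => c m * z ^ m) (g := fun m => d m * z ^ m)
      (hc z hz).1 (hd z hz).1
  · exact (HasSum.mul_norm (f := fun m => c m * z ^ m) (g := fun m => d m * z ^ m)
      (hc z hz).2 (hd z hz).2 (hc z hz).1 (hd z hz).1).of_eq (e z hz)

theorem Lau.sub {A : Set ℂ} {f g : ℂ → ℂ} (hf : Lau A f) (hg : Lau A g) :
    Lau A (fun z => f z - g z) := by
  obtain ⟨c, hc⟩ := hf
  obtain ⟨d, hd⟩ := hg
  refine ⟨fun m => c m - d m, fun z hz => ?_⟩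
  simp only [sub_mul]
  refine ⟨Summable.of_nonneg_of_le (fun _ => norm_nonneg _) (fun m => norm_sub_le _ _)
    ((hc z hz).1.add (hd z hz).1), (hc z hz).2.sub (hd z hz).2⟩

theorem Lau.add {A : Set ℂ} {f g : ℂ → ℂ} (hf : Lau A f) (hg : Lau A g) :
    Lau A (fun z => f z + g z) := by
  obtain ⟨c, hc⟩ := hf
  obtain ⟨d, hd⟩ := hg
  refine ⟨fun m => c m + d m, fun z hz => ?_⟩
  simp only [add_mul]
  refine ⟨Summable.of_nonneg_of_le (fun _ => norm_nonneg _) (fun m => norm_add_le _ _)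
    ((hc z hz).1.add (hd z hz).1), (hc z hz).2.add (hd z hz).2⟩

theorem Lau.const (A : Set ℂ) (a : ℂ) : Lau A (fun _ => a) :=
  Lau.of_family (fun _ : Unit => a) (fun _ => 0) fun z _ =>
    ⟨Summable.of_finite, by simp⟩

theorem Lau.id (A : Set ℂ) : Lau A (fun z => z) :=
  Lau.of_family (fun _ : Unit => 1) (fun _ => 1) fun z _ =>
    ⟨Summable.of_finite, by simp⟩

/-- The annulus `|q| < |z| < 1/|q|`. -/
def ann (q : ℂ) : Set ℂ := {z | ‖z * q‖ < 1 ∧ ‖q‖ < ‖z‖}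

theorem ann_ne_zero {q z : ℂ} (h : z ∈ ann q) : z ≠ 0 :=
  norm_pos_iff.1 ((norm_nonneg _).trans_lt h.2)

theorem ann_of_norm_one {q z : ℂ} (hq : ‖q‖ < 1) (hz : ‖z‖ = 1) : z ∈ ann q := by
  simp [ann, hz, hq]

/-- A Laurent series on the annulus satisfying `f(zq) = -f(z)/z` is a multiple of the theta
function `∑ (-1)^m z^m q^{m(m-1)/2}`, so it vanishes identically if it vanishes at `z = -1`. -/
theorem laurent_zero {q : ℂ} (hq0 : q ≠ 0) (hq : ‖q‖ < 1) {f : ℂ → ℂ} (hf : Lau (ann q) f)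
    (hstep : ∀ z, 1 < ‖z‖ → ‖z * q‖ < 1 → f (z * q) + z⁻¹ * f z = 0) (h0 : f (-1) = 0)
    {z : ℂ} (hz : z ∈ ann q) : f z = 0 := by
  obtain ⟨d, hd⟩ := hf
  have hqn : 0 < ‖q‖ := norm_pos_iff.2 hq0
  obtain ⟨ρ, hρ1, hρ2⟩ := exists_between ((one_lt_inv₀ hqn).2 hq)
  have hρ0 : 0 < ρ := by linarith
  have hρq : ρ * ‖q‖ < 1 := by rwa [lt_inv_comm₀ hρ0 hqn, ← one_div, lt_div_iff₀ hρ0, mul_comm] at hρ2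
  have hmem : ∀ w : ℂ, ‖w‖ = ρ → w ∈ ann q ∧ w * q ∈ ann q := by
    intro w hw
    simp only [ann, Set.mem_ofPred_eq, norm_mul, hw]
    refine ⟨⟨hρq, by linarith⟩, ?_, ?_⟩ <;> nlinarith
  have hρw : ‖(ρ : ℂ)‖ = ρ := by simp [abs_of_pos hρ0]
  have hrec : ∀ m : ℤ, d (m + 1) = -(d m * q ^ m) := by
    intro m
    have h := coef_unique (c := fun m => d m) (E := fun m => m) (d := fun m => -(d m * q ^ m))
      (F := fun m => m + 1) hρ0 (S := f) ?_ ?_ (fun w hw => (hd w (hmem w hw).1).2) ?_ (m + 1)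
    · have e1 : ∑' i : ℤ, (if i = m + 1 then d i else 0) = d (m + 1) := by simp
      have e2 : ∑' i : ℤ, (if i + 1 = m + 1 then -(d i * q ^ i) else 0) = -(d m * q ^ m) := by
        simp
      rw [e1, e2] at h
      exact h
    · have := (hd ρ (hmem ρ hρw).1).1
      simpa only [norm_mul, norm_zpow, hρw] using this
    · have := ((hd (ρ * q) (hmem ρ hρw).2).1).mul_left ρ
      refine this.congr fun m => ?_
      rw [mul_zpow, zpow_add_one₀ hρ0.ne']
      simp only [norm_mul, norm_neg, norm_zpow, hρw]
      ring
    · intro w hw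
      have hw0 := ann_ne_zero (hmem w hw).1
      have h1 := ((hd _ (hmem w hw).2).2).mul_left (-w)
      have h2 := hstep w (by linarith) (hmem w hw).1.1
      have h3 : -w * f (w * q) = f w := by
        rw [eq_neg_of_add_eq_zero_left h2]; field_simp
      rw [h3] at h1
      refine h1.of_eq fun m => ?_
      rw [mul_zpow, zpow_add_one₀ hw0]
      ring
  have hdm : ∀ m : ℤ, d m = d 0 * ((-1) ^ m * q ^ tri m) := by
    intro m
    have ht : ∀ k : ℤ, q ^ tri (k + 1) = q ^ tri k * q ^ k := by
      intro k
      rw [← zpow_add₀ hq0]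
      have h1 := two_tri k
      have h2 := two_tri (k + 1)
      congr 1; linarith
    induction m using Int.induction_on with
    | zero => simp [tri]
    | succ k ih =>
      rw [hrec, ih, ht, zpow_add_one₀ (show (-1 : ℂ) ≠ 0 by norm_num)]
      ring
    | pred k ih =>
      have h1 := hrec (-k - 1)
      have h2 := ht (-k - 1)
      rw [sub_add_cancel] at h1 h2
      have h3 := zpow_ne_zero (-(k : ℤ) - 1) hq0
      have h4 : (-1 : ℂ) ^ (-(k : ℤ)) = (-1) ^ (-(k : ℤ) - 1) * (-1) := by
        rw [← zpow_add_one₀ (show (-1 : ℂ) ≠ 0 by norm_num), sub_add_cancel]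
      rw [h1, h2, h4] at ih
      have : d (-k - 1) * q ^ (-(k : ℤ) - 1) =
          (d 0 * ((-1) ^ (-(k : ℤ) - 1) * q ^ tri (-k - 1))) * q ^ (-(k : ℤ) - 1) := by
        linear_combination -ih
      exact mul_right_cancel₀ h3 this
  have hfz : ∀ w ∈ ann q, f w = d 0 * (qPochInf w q * qPochInf (q / w) q * qPochInf q q) := by
    intro w hw
    refine (hd w hw).2.unique (((jacobi_triple hq0 hq hw.2).mul_left (d 0)).of_eq fun m => ?_)
    rw [hdm, thetaTerm]; ring
  have h1 := hfz (-1) (ann_of_norm_one hq (by simp))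
  have h2 : qPochInf (-1) q * qPochInf (q / -1) q * qPochInf q q ≠ 0 := by
    refine mul_ne_zero (mul_ne_zero (qPochInf_ne_zero hq fun k => ?_)
      (qPochInf_ne_zero hq (mul_pow_ne_one (by simpa using hq) hq)))
      (qPochInf_ne_zero hq (mul_pow_ne_one hq hq))
    rcases Nat.eq_zero_or_pos k with rfl | hk
    · norm_num
    · intro h
      have h3 := congrArg norm h
      simp only [norm_mul, norm_neg, norm_one, one_mul, norm_pow] at h3
      exact (pow_lt_one₀ (norm_nonneg _) hq hk.ne').ne h3
  rw [h0] at h1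
  have h3 : d 0 = 0 := by
    rcases mul_eq_zero.1 h1.symm with h | h
    · exact h
    · exact absurd h h2
  rw [hfz z hz, h3, zero_mul]

/-! ### The Hecke–Rogers double series -/

/-- The exponent `n(n+1)/2 - k(3k+1)/2` of the Hecke–Rogers series. -/
def ex (n : ℕ) (k : ℤ) : ℤ := tri n + n - (3 * tri k + 2 * k)

theorem two_ex (n : ℕ) (k : ℤ) : 2 * ex n k = n * (n + 1) - k * (3 * k + 1) := by
  rw [ex]
  linear_combination two_tri n - 3 * two_tri k

theorem ex_bound {n : ℕ} {k : ℤ} (h : 2 * |k| ≤ n) : n ^ 2 + 2 * (n : ℤ) ≤ 8 * ex n k := by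
  have h1 := two_ex n k
  obtain ⟨h2, h3⟩ := abs_le.1 (show |k| ≤ |k| from le_rfl)
  nlinarith [abs_nonneg k, sq_abs k, le_abs_self k, neg_abs_le k]

theorem ex_nonneg {n : ℕ} {k : ℤ} (h : 2 * |k| ≤ n) : 0 ≤ ex n k := by
  have := ex_bound h
  nlinarith [sq_nonneg (n : ℤ)]

/-- The coefficient `(-1)^{n+k}`, restricted to `2|k| ≤ n`. -/
noncomputable def hc (n : ℕ) (k : ℤ) : ℂ := if 2 * |k| ≤ n then (-1) ^ ((n : ℤ) + k) else 0

theorem exists_root {r : ℝ} (hr : r < 1) (k : ℕ) : ∃ t : ℝ, 0 < t ∧ t < 1 ∧ r ≤ t ^ k := by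
  have h : Tendsto (fun t : ℝ => t ^ k) (𝓝[<] 1) (𝓝 1) := by
    have : Tendsto (fun t : ℝ => t ^ k) (𝓝 1) (𝓝 (1 ^ k)) := (continuous_pow k).tendsto 1
    rw [one_pow] at this
    exact this.mono_left nhdsWithin_le_nhds
  have h2 : ∀ᶠ t in 𝓝[<] (1 : ℝ), 0 < t :=
    nhdsWithin_le_nhds (lt_mem_nhds one_pos)
  obtain ⟨t, ht1, ht2, ht3⟩ :=
    ((h.eventually (lt_mem_nhds hr)).and (h2.and self_mem_nhdsWithin)).exists
  exact ⟨t, ht2, ht3, ht1.le⟩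

/-- Since `8 ex n k ≥ n² + 2n` and `2|k| ≤ n`, the exponent dominates a positive definite quadratic form in
`(n, k)`, and the double series is bounded by a product of two single ones. -/
theorem hc_summable (x : ℂ) {q : ℂ} (hq : ‖q‖ < 1) :
    Summable fun p : ℕ × ℤ => ‖hc p.1 p.2 * x ^ p.1 * q ^ (ex p.1 p.2).toNat‖ := by
  obtain ⟨t, ht0, ht1, ht⟩ := exists_root hq 16
  have htc : ((t : ℝ) : ℂ) ≠ 0 := by exact_mod_cast ht0.ne'
  have htn : ‖((t : ℝ) : ℂ)‖ = t := by simp [abs_of_pos ht0]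
  have h1 := summable_geom_choose ‖x‖ (norm_nonneg _) ht0.le ht1
  have h2 := th1_norm_summable htc (by rwa [htn]) two_pos 1
  refine Summable.of_nonneg_of_le (fun _ => norm_nonneg _) (fun p => ?_)
    (h1.mul_of_nonneg h2 (fun _ => by positivity) fun _ => norm_nonneg _)
  obtain ⟨n, k⟩ := p
  simp only [norm_mul, norm_pow, hc]
  split_ifs with h
  · have hb := ex_bound h
    have h3 : (n.choose 2 : ℤ) + (2 * tri k + k) ≤ 16 * ex n k := by
      rw [← tri_natCast]
      nlinarith [two_tri k, two_tri n, abs_nonneg k, sq_abs k, le_abs_self k, neg_abs_le k]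
    have h4 : ‖th1 2 1 (t : ℂ) k‖ = t ^ (2 * tri k + k) := by
      simp [th1, abs_of_pos ht0]
    rw [h4, norm_neg_one_zpow, one_mul, mul_assoc]
    gcongr
    calc ‖q‖ ^ (ex n k).toNat ≤ (t ^ 16) ^ (ex n k).toNat := by gcongr
      _ = t ^ (16 * ex n k) := by
        rw [← pow_mul, ← zpow_natCast]
        congr 1
        rw [Nat.cast_mul, Int.toNat_of_nonneg (ex_nonneg h)]
        rfl
      _ ≤ t ^ ((n.choose 2 : ℤ) + (2 * tri k + k)) := zpow_le_zpow_right_of_le_one₀ ht0 ht1.le h3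
      _ = _ := by rw [zpow_add₀ ht0.ne', zpow_natCast]
  · simp
    positivity

/-- The general term of the half series `∑_n ∑_{2|k| ≤ n} (-1)^{n+k} x^n q^{n(n+1)/2-k(3k+1)/2}`. -/
noncomputable def hTerm (x q : ℂ) (p : ℕ × ℤ) : ℂ := hc p.1 p.2 * x ^ p.1 * q ^ ex p.1 p.2

theorem hTerm_eq (x q : ℂ) (p : ℕ × ℤ) :
    hTerm x q p = hc p.1 p.2 * x ^ p.1 * q ^ (ex p.1 p.2).toNat := by
  rw [hTerm, hc]
  split_ifs with h
  · rw [← zpow_natCast q, Int.toNat_of_nonneg (ex_nonneg h)]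
  · simp

theorem hTerm_norm_summable (x : ℂ) {q : ℂ} (hq : ‖q‖ < 1) :
    Summable fun p => ‖hTerm x q p‖ := by
  simpa only [hTerm_eq] using hc_summable x hq

/-- The sum of the half series. -/
noncomputable def hS (x q : ℂ) : ℂ := ∑' p, hTerm x q p

theorem hS_hasSum (x : ℂ) {q : ℂ} (hq : ‖q‖ < 1) : HasSum (hTerm x q) (hS x q) :=
  (hTerm_norm_summable x hq).of_norm.hasSum

/-- Telescoping in `n`: only the boundary terms `n = 2|k|` survive in `S(x) + xq S(xq)`. -/
theorem hS_step (x : ℂ) {q : ℂ} (hq0 : q ≠ 0) (hq : ‖q‖ < 1) :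
    HasSum (fun k : ℤ => (-1) ^ k * x ^ (2 * k.natAbs) * q ^ ex (2 * k.natAbs) k)
      (hS x q + x * q * hS (x * q) q) := by
  set U : ℕ × ℤ → ℂ := fun p => (-1) ^ ((p.1 : ℤ) + p.2) * x ^ p.1 * q ^ ex p.1 p.2 with hU
  have h1 := hS_hasSum x hq
  have h2 := (hS_hasSum (x * q) hq).mul_left (x * q)
  have h3 : HasSum (fun p : ℕ × ℤ => if 2 * |p.2| + 1 ≤ p.1 then -U p else 0)
      (x * q * hS (x * q) q) := by
    have hinj : Function.Injective fun p : ℕ × ℤ => (p.1 + 1, p.2) := by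
      rintro ⟨a, b⟩ ⟨c, d⟩ h
      simpa using h
    rw [← hinj.hasSum_iff]
    · refine h2.of_eq fun p => ?_
      obtain ⟨n, k⟩ := p
      simp only [Function.comp, hTerm, hc, hU]
      by_cases h : 2 * |k| ≤ n
      · rw [if_pos (by push_cast; omega), if_pos h]
        have e : ex (n + 1) k = ex n k + (n + 1) := by
          have := two_ex (n + 1) k
          have := two_ex n k
          push_cast at *
          linarith
        rw [e, zpow_add₀ hq0, show ((n + 1 : ℕ) : ℤ) + k = (n + k) + 1 by push_cast; ring,
          zpow_add_one₀ (show (-1 : ℂ) ≠ 0 by norm_num), pow_succ, mul_pow,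
          zpow_add_one₀ hq0, zpow_natCast]
        ring
      · rw [if_neg (by push_cast; omega), if_neg h]
        simp
    · rintro ⟨n, k⟩ hp
      rcases n with _ | n
      · have := abs_nonneg k
        simp only [Nat.cast_zero]
        rw [if_neg (by omega)]
      · exact absurd ⟨(n, k), rfl⟩ hp
  have hinj : Function.Injective fun k : ℤ => (2 * k.natAbs, k) := fun a b h => by
    simp only [Prod.mk.injEq] at h; exact h.2
  have h4 := h1.add h3
  rw [← hinj.hasSum_iff] at h4
  · refine h4.of_eq fun k => ?_
    simp only [Function.comp, hTerm, hc, hU]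
    rw [if_pos (by push_cast; omega), if_neg (by push_cast; omega), add_zero,
      neg_one_zpow_congr (m := ((2 * k.natAbs : ℕ) : ℤ) + k) (n := k) ⟨k.natAbs, by push_cast; ring⟩]
  · rintro ⟨n, k⟩ hp
    have hn : (n : ℤ) ≠ 2 * |k| := by
      intro h
      refine hp ⟨k, ?_⟩
      simp only [Prod.mk.injEq, and_true]
      rw [Int.abs_eq_natAbs] at h
      omega
    simp only [hTerm, hc, hU]
    by_cases h : 2 * |k| ≤ n
    · rw [if_pos h, if_pos (by omega)]; ring
    · rw [if_neg h, if_neg (by omega)]; ring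

/-- The Hecke–Rogers double series
`∑_{n ≥ 0} ∑_{2|k| ≤ n} (-1)^{n+k} (z^{n+1} + z^{-n}) q^{n(n+1)/2 - k(3k+1)/2}`. -/
noncomputable def hr (z q : ℂ) : ℂ := z * hS z q + hS z⁻¹ q

/-- The boundary terms of `hS_step` at `z` and at `(zq)⁻¹` add up to the theta series of the triple
product with argument `z²`. -/
theorem hr_step {z q : ℂ} (hq0 : q ≠ 0) (hq : ‖q‖ < 1) (hz : z ≠ 0) (hz2 : ‖q‖ < ‖z ^ 2‖) :
    hr (z * q) q + z⁻¹ * hr z q = (z ^ 4)⁻¹ * q⁻¹ * (1 - z ^ 2 * q) *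
      (qPochInf (z ^ 2) q * qPochInf (q / z ^ 2) q * qPochInf q q) := by
  have h1 := hS_step z hq0 hq
  have h2 := hS_step (z * q)⁻¹ hq0 hq
  have h3 := h1.add h2
  have e1 : (z * q)⁻¹ * q = z⁻¹ := by field_simp
  have hs : hS z q + z * q * hS (z * q) q + (hS (z * q)⁻¹ q + (z * q)⁻¹ * q * hS ((z * q)⁻¹ * q) q) =
      hr (z * q) q + z⁻¹ * hr z q := by
    rw [hr, hr, e1, mul_add, inv_mul_cancel_left₀ hz]; ring
  rw [hs] at h3
  have hth := jacobi_triple hq0 hq hz2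
  set T := qPochInf (z ^ 2) q * qPochInf (q / z ^ 2) q * qPochInf q q
  -- the two shifted theta series
  have h4 := (((Equiv.addRight (1 : ℤ)).hasSum_iff.2 hth).mul_left (-(z ^ 2)⁻¹))
  have h5 := (((Equiv.neg ℤ).trans (Equiv.addRight (2 : ℤ))).hasSum_iff.2 hth).mul_left
    ((z ^ 4)⁻¹ * q⁻¹)
  have h6 := h4.add h5
  have h7 : -(z ^ 2)⁻¹ * T + (z ^ 4)⁻¹ * q⁻¹ * T = (z ^ 4)⁻¹ * q⁻¹ * (1 - z ^ 2 * q) * T := by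
    field_simp; ring
  rw [h7] at h6
  refine h3.unique (h6.of_eq fun k => ?_)
  simp only [Function.comp, Equiv.coe_addRight, Equiv.trans_apply, Equiv.neg_apply, thetaTerm]
  have hz2' : z ^ 2 ≠ 0 := pow_ne_zero _ hz
  -- the two summands, with the factor `q^e` split off
  have a1 : -(z ^ 2)⁻¹ * ((-1) ^ (k + 1) * (z ^ 2) ^ (k + 1) * q ^ tri (k + 1)) =
      (-1) ^ k * z ^ (2 * k) * q ^ tri (k + 1) := by
    rw [zpow_add_one₀ (show (-1 : ℂ) ≠ 0 by norm_num), zpow_add_one₀ hz2', zpow_mul,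
      show z ^ (2 : ℤ) = z ^ 2 from zpow_ofNat z 2]
    field_simp
  have a2 : (z ^ 4)⁻¹ * q⁻¹ * ((-1) ^ (-k + 2) * (z ^ 2) ^ (-k + 2) * q ^ tri (-k + 2)) =
      (-1) ^ k * z ^ (-(2 * k)) * q ^ (tri (-k + 2) - 1) := by
    rw [neg_one_zpow_congr (m := -k + 2) (n := k) ⟨1 - k, by ring⟩, zpow_add₀ hz2',
      zpow_sub_one₀ hq0, show -(2 * k) = 2 * (-k) by ring, zpow_mul,
      show z ^ (2 : ℤ) = z ^ 2 from zpow_ofNat z 2, zpow_ofNat]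
    field_simp
  rw [a1, a2]
  have t1 := two_tri (k + 1)
  have t2 := two_tri (-k + 2)
  have t3 := two_ex (2 * k.natAbs) k
  push_cast at t3
  have p1 : ∀ y : ℂ, y ^ (2 * k.natAbs) = y ^ (2 * |k|) := fun y => by
    rw [← zpow_natCast]; push_cast; rfl
  rw [p1, p1, inv_zpow', mul_zpow]
  rcases le_total 0 k with hk | hk
  · rw [abs_of_nonneg hk] at t3 ⊢
    have b1 : ex (2 * k.natAbs) k = tri (k + 1) := by linarith
    have b2 : tri (-k + 2) - 1 = -(2 * k) + tri (k + 1) := by linarith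
    rw [b1, b2, zpow_add₀ hq0]
    ring
  · rw [abs_of_nonpos hk] at t3 ⊢
    have b1 : ex (2 * k.natAbs) k = tri (-k + 2) - 1 := by linarith
    have b2 : tri (k + 1) = 2 * k + (tri (-k + 2) - 1) := by linarith
    rw [b1, b2, zpow_add₀ hq0, show -(2 * -k) = 2 * k by ring, show 2 * -k = -(2 * k) by ring]
    ring

theorem hS_lau (q : ℂ) (hq : ‖q‖ < 1) (A : Set ℂ) : Lau A (fun z => hS z q) :=
  Lau.of_family (fun p : ℕ × ℤ => hc p.1 p.2 * q ^ ex p.1 p.2) (fun p => p.1) fun z _ => by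
    have e : ∀ p : ℕ × ℤ, hc p.1 p.2 * q ^ ex p.1 p.2 * z ^ (p.1 : ℤ) = hTerm z q p := fun p => by
      rw [hTerm, zpow_natCast]; ring
    simp only [e]
    exact ⟨hTerm_norm_summable z hq, hS_hasSum z hq⟩

theorem hS_inv_lau (q : ℂ) (hq : ‖q‖ < 1) (A : Set ℂ) : Lau A (fun z => hS z⁻¹ q) :=
  Lau.of_family (fun p : ℕ × ℤ => hc p.1 p.2 * q ^ ex p.1 p.2) (fun p => -p.1) fun z _ => by
    have e : ∀ p : ℕ × ℤ, hc p.1 p.2 * q ^ ex p.1 p.2 * z ^ (-p.1 : ℤ) = hTerm z⁻¹ q p := fun p => by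
      rw [hTerm, zpow_neg, zpow_natCast, inv_pow]; ring
    simp only [e]
    exact ⟨hTerm_norm_summable _ hq, hS_hasSum _ hq⟩

theorem qPochInf_lau {q : ℂ} (hq : ‖q‖ < 1) {A : Set ℂ} (a : ℤ) :
    Lau A (fun z => qPochInf (z ^ a * q) q) :=
  Lau.of_family (fun k : ℕ => eulerC q k * q ^ k) (fun k => a * k) fun z _ => by
    have e : ∀ k : ℕ, eulerC q k * q ^ k * z ^ (a * k) = eulerC q k * (z ^ a * q) ^ k := fun k => by
      rw [mul_pow, zpow_mul, zpow_natCast]; ring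
    simp only [e]
    exact ⟨eulerC_summable _ hq, euler_one _ hq⟩

theorem rankGF_lau {q : ℂ} (hq : ‖q‖ < 1) : Lau (ann q) (fun z => rankGF z q) :=
  Lau.of_family (fun x : Σ n : ℕ, n.Partition => q ^ x.1) (fun x => partitionRank x.2)
    fun z hz => by
    have e : ∀ x : Σ n : ℕ, n.Partition, q ^ x.1 * z ^ partitionRank x.2 = rankTerm z q x :=
      fun x => by rw [rankTerm]; ring
    have hz0 := ann_ne_zero hz
    have h2 : ‖z⁻¹ * q‖ < 1 := by
      rw [norm_mul, norm_inv, inv_mul_lt_one₀ (norm_pos_iff.2 hz0)]; exact hz.2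
    simp only [e]
    exact ⟨rankTerm_norm_summable hz0 hq hz.1 h2, rankGF_hasSum hz0 hq hz.1 h2⟩

/-- The Hecke–Rogers type double series for the normalized rank generating function. -/
theorem rankGFtilde_eq_hr {z q : ℂ} (hq0 : q ≠ 0) (hq : ‖q‖ < 1) (hz : z ∈ ann q) :
    rankGFtilde z q = hr z q := by
  have hA : ∀ z ∈ ann q, z ≠ 0 := fun z h => ann_ne_zero h
  have h1 : Lau (ann q) (fun z => rankGFtilde z q) := by
    have := (((((Lau.const (ann q) 1).add (Lau.id _)).mul hA (qPochInf_lau hq 2)).mul hA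
      (qPochInf_lau hq (-2))).mul hA (Lau.const _ (qPochInf q q))).mul hA (rankGF_lau hq)
    simpa only [rankGFtilde, zpow_ofNat] using this
  have h2 : Lau (ann q) (fun z => hr z q) :=
    ((Lau.id _).mul hA (hS_lau q hq _)).add (hS_inv_lau q hq _)
  have h3 := laurent_zero hq0 hq (h1.sub h2) (fun w hw hwq => ?_) ?_ hz
  · exact sub_eq_zero.1 h3
  · have hw0 : w ≠ 0 := norm_pos_iff.1 (by linarith)
    have a1 := rankGFtilde_step hq0 hw hwq
    have a2 := hr_step hq0 hq hw0 (hq.trans (by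
      rw [norm_pow]; exact one_lt_pow₀ hw two_ne_zero))
    linear_combination a1 - a2
  · simp only [rankGFtilde, hr]
    rw [show ((-1 : ℂ))⁻¹ = -1 by norm_num]
    ring

/-! ### Sections of power series -/

/-- Absolute convergence of the series `∑ c_i q^{e_i}` on the open unit disc. -/
def Adm {ι : Type*} (c : ι → ℂ) (e : ι → ℕ) : Prop :=
  ∀ q : ℂ, ‖q‖ < 1 → Summable fun i => ‖c i * q ^ e i‖

/-- The coefficient of `q^m` in the series `∑ c_i q^{e_i}`. -/
noncomputable def coefOf {ι : Type*} (c : ι → ℂ) (e : ι → ℕ) (m : ℕ) : ℂ :=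
  ∑' i, if e i = m then c i else 0

theorem tsum_coefOf {ι : Type*} {c : ι → ℂ} {e : ι → ℕ} (h : Adm c e) {q : ℂ} (hq : ‖q‖ < 1) :
    ∑' m, coefOf c e m * q ^ m = ∑' i, c i * q ^ e i := by
  have h1 := (h q hq).of_norm.hasSum
  have hinj : Function.Injective fun i : ι => (e i, i) := fun a b hab => by
    simp only [Prod.mk.injEq] at hab; exact hab.2
  have h2 : HasSum (fun p : ℕ × ι => if e p.2 = p.1 then c p.2 * q ^ p.1 else 0)
      (∑' i, c i * q ^ e i) := by
    rw [← hinj.hasSum_iff]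
    · exact h1.of_eq fun i => by simp
    · rintro ⟨m, i⟩ hp
      refine if_neg fun hm => hp ⟨i, ?_⟩
      simp only at hm
      simp [hm]
  have h3 := h2.prod_fiberwise fun m => (h2.summable.prod_factor m).hasSum
  rw [← h3.tsum_eq]
  congr 1
  funext m
  rw [coefOf, ← tsum_mul_right]
  congr 1
  funext i
  simp only [ite_mul, zero_mul]

theorem coefOf_congr {ι κ : Type*} [Countable ι] [Countable κ] {c : ι → ℂ} {e : ι → ℕ}
    {d : κ → ℂ} {f : κ → ℕ} {ρ : ℝ} (hρ : 0 < ρ)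
    (hc : Summable fun i => ‖c i‖ * ρ ^ e i) (hd : Summable fun j => ‖d j‖ * ρ ^ f j)
    (h : ∀ q : ℂ, ‖q‖ = ρ → ∑' i, c i * q ^ e i = ∑' j, d j * q ^ f j) (m : ℕ) :
    coefOf c e m = coefOf d f m := by
  have h1 := coef_unique (c := c) (E := fun i => (e i : ℤ)) (d := d) (F := fun j => (f j : ℤ))
    hρ (by simpa only [zpow_natCast] using hc) (by simpa only [zpow_natCast] using hd)
    (S := fun q => ∑' i, c i * q ^ e i)
    (fun z hz => by
      simp only [zpow_natCast]
      refine (Summable.of_norm ?_).hasSum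
      simpa only [norm_mul, norm_pow, hz] using hc)
    (fun z hz => by
      simp only [zpow_natCast]
      rw [h z hz]
      refine (Summable.of_norm ?_).hasSum
      simpa only [norm_mul, norm_pow, hz] using hd) m
  simpa only [Nat.cast_inj, coefOf] using h1

theorem Adm.real {ι : Type*} {c : ι → ℂ} {e : ι → ℕ} (h : Adm c e) {ρ : ℝ} (h0 : 0 < ρ)
    (h1 : ρ < 1) : Summable fun i => ‖c i‖ * ρ ^ e i := by
  have := h ρ (by simpa [abs_of_pos h0] using h1)
  simpa [abs_of_pos h0] using this

/-- The part of a coefficient family whose exponents are `r` modulo `5`. -/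
def sect {ι : Type*} (r : ℕ) (c : ι → ℂ) (e : ι → ℕ) (i : ι) : ℂ :=
  if e i % 5 = r then c i else 0

theorem Adm.sect {ι : Type*} {c : ι → ℂ} {e : ι → ℕ} (h : Adm c e) (r : ℕ) :
    Adm (sect r c e) (fun i => e i / 5) := fun q hq => by
  obtain ⟨t, ht0, ht1, ht⟩ := exists_root hq 5
  refine Summable.of_nonneg_of_le (fun _ => norm_nonneg _) (fun i => ?_)
    ((h.real ht0 ht1).mul_left (t ^ r)⁻¹)
  rw [norm_mul, norm_pow, _root_.sect]
  split_ifs with hi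
  · calc ‖c i‖ * ‖q‖ ^ (e i / 5) ≤ ‖c i‖ * (t ^ 5) ^ (e i / 5) := by gcongr
      _ = (t ^ r)⁻¹ * (‖c i‖ * (t ^ r * (t ^ 5) ^ (e i / 5))) := by field_simp
      _ = _ := by rw [← pow_mul, ← pow_add, ← hi, Nat.mod_add_div]
  · simp; positivity

theorem coefOf_sect {ι : Type*} {r : ℕ} (hr : r < 5) (c : ι → ℂ) (e : ι → ℕ) (m : ℕ) :
    coefOf (sect r c e) (fun i => e i / 5) m = coefOf c e (5 * m + r) := by
  rw [coefOf, coefOf]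
  congr 1
  funext i
  rw [sect]
  split_ifs <;> first | rfl | omega

/-- Two families with the same sum have the same section along the exponents `4` modulo `5`. -/
theorem dissect {ι κ : Type*} [Countable ι] [Countable κ] {c : ι → ℂ} {e : ι → ℕ}
    {d : κ → ℂ} {f : κ → ℕ} (hc : Adm c e) (hd : Adm d f)
    (h : ∀ q : ℂ, q ≠ 0 → ‖q‖ < 1 → ∑' i, c i * q ^ e i = ∑' j, d j * q ^ f j)
    {q : ℂ} (hq : ‖q‖ < 1) :
    ∑' i, sect 4 c e i * q ^ (e i / 5) = ∑' j, sect 4 d f j * q ^ (f j / 5) := by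
  rw [← tsum_coefOf (hc.sect 4) hq, ← tsum_coefOf (hd.sect 4) hq]
  congr 1
  funext m
  rw [coefOf_sect (by norm_num), coefOf_sect (by norm_num), coefOf_congr (ρ := 1 / 2) (by norm_num)
    (hc.real (by norm_num) (by norm_num)) (hd.real (by norm_num) (by norm_num))]
  intro z hz
  refine h z (fun h0 => ?_) (by rw [hz]; norm_num)
  rw [h0, norm_zero] at hz; norm_num at hz

/-- A power series that represents, on the unit disc, a function given by an absolutely convergent
family with nonzero constant coefficient converges absolutely there. Otherwise it would diverge on
an outer annulus, where its `tsum` is zero by convention. -/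
theorem Adm.of_tsum_eq {κ : Type*} [Countable κ] {a : ℕ → ℂ} {d : κ → ℂ} {f : κ → ℕ}
    (hd : Adm d f) (h0 : coefOf d f 0 ≠ 0)
    (h : ∀ q : ℂ, q ≠ 0 → ‖q‖ < 1 → ∑' n, a n * q ^ n = ∑' j, d j * q ^ f j) :
    Adm a (fun n => n) := by
  intro q₀ hq₀
  by_contra hns
  have hdiv : ∀ q : ℂ, ‖q₀‖ < ‖q‖ → ¬ Summable fun n => a n * q ^ n := fun q hq hs => by
    refine hns ?_
    have hq0 : 0 < ‖q‖ := (norm_nonneg _).trans_lt hq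
    obtain ⟨C, hC⟩ := hs.tendsto_atTop_zero.norm.bddAbove_range
    refine Summable.of_nonneg_of_le (fun _ => norm_nonneg _) (fun n => ?_)
      ((summable_geometric_of_lt_one (by positivity) ((div_lt_one hq0).2 hq)).mul_left C)
    have h1 : ‖a n * q ^ n‖ ≤ C := hC ⟨n, rfl⟩
    calc ‖a n * q₀ ^ n‖ = ‖a n * q ^ n‖ * (‖q₀‖ / ‖q‖) ^ n := by
          rw [norm_mul, norm_mul, norm_pow, norm_pow, div_pow]; field_simp
      _ ≤ _ := by gcongr
  obtain ⟨ρ, hρ1, hρ2⟩ := exists_between hq₀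
  have hρ0 : 0 < ρ := (norm_nonneg _).trans_lt hρ1
  refine h0 ((coefOf_congr (d := fun _ : ℕ => (0 : ℂ)) (f := fun n => n) hρ0 (hd.real hρ0 hρ2)
    (by simp) (fun q hq => ?_) 0).trans (by simp [coefOf]))
  rw [← h q (norm_pos_iff.1 (hq ▸ hρ0)) (hq ▸ hρ2),
    tsum_eq_zero_of_not_summable (hdiv q (hq ▸ hρ1))]
  simp

/-! ### The section of the squared Euler product -/

theorem tsum_split' {ι κ μ : Type*} {i : ι → μ} {j : κ → μ} (hi : i.Injective) (hj : j.Injective)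
    (hd : ∀ x y, i x ≠ j y) {f : μ → ℂ} (hs : ∀ z, f z ≠ 0 → (∃ x, i x = z) ∨ ∃ y, j y = z)
    (hf : Summable f) : ∑' z, f z = ∑' x, f (i x) + ∑' y, f (j y) := by
  have hinj : Function.Injective (Sum.elim i j) := hi.sumElim hj hd
  have h1 : Function.support f ⊆ Set.range (Sum.elim i j) := fun z hz => by
    rcases hs z hz with ⟨x, rfl⟩ | ⟨y, rfl⟩
    · exact ⟨Sum.inl x, rfl⟩
    · exact ⟨Sum.inr y, rfl⟩
  rw [← hinj.tsum_eq h1]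
  have h2 := hf.comp_injective hinj
  rw [Summable.tsum_sum]
  · simp
  · exact h2.comp_injective Sum.inl_injective
  · exact h2.comp_injective Sum.inr_injective

theorem Adm.of_ne_zero {ι : Type*} {c : ι → ℂ} {e : ι → ℕ}
    (h : ∀ q : ℂ, q ≠ 0 → ‖q‖ < 1 → Summable fun i => ‖c i * q ^ e i‖) : Adm c e := fun q hq => by
  by_cases h0 : q = 0
  · refine Summable.of_nonneg_of_le (fun _ => norm_nonneg _) (fun i => ?_)
      (h (1 / 2) (by norm_num) (by norm_num))
    rw [norm_mul, norm_mul, norm_pow, norm_pow]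
    gcongr
    simp [h0]
  · exact h q h0 hq

/-- The pentagonal numbers `k(3k+1)/2`. -/
def pent (k : ℤ) : ℕ := (3 * tri k + 2 * k).toNat

theorem pent_cast (k : ℤ) : (pent k : ℤ) = 3 * tri k + 2 * k := by
  refine Int.toNat_of_nonneg ?_
  have := two_tri k
  rcases le_or_gt 0 k with h | h <;> nlinarith

theorem two_pent (k : ℤ) : 2 * (pent k : ℤ) = k * (3 * k + 1) := by
  rw [pent_cast]
  linear_combination 3 * two_tri k

theorem pent_mod (k : ℤ) : pent k % 5 ≤ 2 ∧ (pent k % 5 = 2 → k % 5 = 1 ∨ k % 5 = 2) := by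
  have h := congrArg (· % 5) (two_pent k)
  have h5 : k % 5 = 0 ∨ k % 5 = 1 ∨ k % 5 = 2 ∨ k % 5 = 3 ∨ k % 5 = 4 := by omega
  rcases h5 with h5 | h5 | h5 | h5 | h5 <;>
    simp [Int.mul_emod, Int.add_emod, h5] at h <;> omega

theorem th1_pent (q : ℂ) (k : ℤ) : th1 3 2 q k = (-1) ^ k * q ^ pent k := by
  rw [th1, ← zpow_natCast q (pent k), pent_cast]
  rfl

theorem pent_adm : Adm (fun k : ℤ => (-1 : ℂ) ^ k) pent := Adm.of_ne_zero fun q hq0 hq => by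
  simpa only [th1_pent] using th1_norm_summable hq0 hq (c := 3) (by norm_num) 2

theorem pent2_adm : Adm (fun p : ℤ × ℤ => (-1 : ℂ) ^ p.1 * (-1) ^ p.2)
    (fun p => pent p.1 + pent p.2) := fun q hq => by
  have h := (pent_adm q hq).mul_norm (pent_adm q hq)
  refine h.congr fun p => ?_
  congr 1
  rw [pow_add]; ring

/-- The part of the pentagonal series with exponents `2` modulo `5`. -/
noncomputable def zSum (q : ℂ) : ℂ := ∑' k, sect 2 (fun k : ℤ => (-1 : ℂ) ^ k) pent k * q ^ (pent k / 5)

/-- As pentagonal numbers are `0, 1, 2` modulo `5`, a sum of two of them is `4` modulo `5` only if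
both are `2`. -/
theorem pent2_sect {q : ℂ} (hq : ‖q‖ < 1) :
    ∑' p : ℤ × ℤ, sect 4 (fun p : ℤ × ℤ => (-1 : ℂ) ^ p.1 * (-1) ^ p.2)
      (fun p => pent p.1 + pent p.2) p * q ^ ((pent p.1 + pent p.2) / 5) = zSum q ^ 2 := by
  have h := pent_adm.sect 2 q hq
  rw [zSum, sq, ← (h.of_norm.hasSum.mul_norm h.of_norm.hasSum h h).tsum_eq]
  congr 1
  funext p
  obtain ⟨h1, -⟩ := pent_mod p.1
  obtain ⟨h2, -⟩ := pent_mod p.2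
  simp only [sect]
  by_cases h3 : pent p.1 % 5 = 2 <;> by_cases h4 : pent p.2 % 5 = 2
  · rw [if_pos (by omega), if_pos h3, if_pos h4,
      show (pent p.1 + pent p.2) / 5 = pent p.1 / 5 + pent p.2 / 5 by omega, pow_add]
    ring
  all_goals
    rw [if_neg (by omega)]
    simp [h3, h4]

theorem zSum_eq {q : ℂ} (hq0 : q ≠ 0) (hq : ‖q‖ < 1) :
    zSum q = -(∑' l, th1 15 11 q l - q * ∑' l, th1 15 14 q l) := by
  rw [zSum, tsum_split' (i := fun l : ℤ => 5 * l + 1) (j := fun l : ℤ => 5 * l + 2)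
    (fun a b h => by simpa using h) (fun a b h => by simpa using h) (fun a b => by omega) _
    (pent_adm.sect 2 q hq).of_norm, neg_sub, sub_eq_neg_add, ← tsum_neg, ← tsum_mul_left]
  · congr 2 <;> funext l
    · have h1 := two_pent (5 * l + 1)
      have h2 := two_tri l
      have h3 : (pent (5 * l + 1) : ℤ) = 5 * (15 * tri l + 11 * l) + 2 := by linarith
      rw [sect, if_pos (by omega), th1, ← zpow_natCast q,
        neg_one_zpow_congr_neg (m := 5 * l + 1) (n := l) ⟨2 * l, by ring⟩,
        show ((pent (5 * l + 1) / 5 : ℕ) : ℤ) = 15 * tri l + 11 * l by omega]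
      push_cast; ring
    · have h1 := two_pent (5 * l + 2)
      have h2 := two_tri l
      have h3 : (pent (5 * l + 2) : ℤ) = 5 * (15 * tri l + 14 * l + 1) + 2 := by linarith
      rw [sect, if_pos (by omega), th1, ← zpow_natCast q,
        neg_one_zpow_congr (m := 5 * l + 2) (n := l) ⟨2 * l + 1, by ring⟩,
        show ((pent (5 * l + 2) / 5 : ℕ) : ℤ) = 15 * tri l + 14 * l + 1 by omega,
        zpow_add_one₀ hq0]
      push_cast; ring
  · intro k hk
    simp only [sect] at hk
    have : pent k % 5 = 2 := by
      by_contra h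
      simp [h] at hk
    rcases (pent_mod k).2 this with h | h
    · exact Or.inl ⟨k / 5, by omega⟩
    · exact Or.inr ⟨k / 5, by omega⟩

theorem qPochInf_zero_left (q : ℂ) : qPochInf 0 q = 1 := by simp [qPochInf]

theorem Jba_ne_zero {q : ℂ} (hq : ‖q‖ < 1) : Jba 5 2 q ≠ 0 := by
  have h5 := norm_pow_lt hq (c := 5) (by norm_num)
  refine mul_ne_zero (mul_ne_zero ?_ ?_) ?_ <;> refine qPochInf_ne_zero h5 (mul_pow_ne_one ?_ h5)
  · exact norm_pow_lt hq (by norm_num)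
  · exact norm_pow_lt hq (by norm_num)
  · exact h5

theorem zSum_sq {q : ℂ} (hq : ‖q‖ < 1) :
    zSum q ^ 2 = Jb 5 q ^ 2 * Jba 5 1 q ^ 2 / Jba 5 2 q ^ 2 := by
  rw [eq_div_iff (pow_ne_zero 2 (Jba_ne_zero hq)), ← mul_pow, ← mul_pow]
  by_cases hq0 : q = 0
  · subst hq0
    have hz : zSum 0 = -1 := by
      rw [zSum, tsum_eq_single 1]
      · have : pent 1 = 2 := by decide
        simp [sect, this]
      · intro k hk
        rw [sect]
        split_ifs with h
        · rw [zero_pow, mul_zero]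
          intro h1
          have h2 := two_pent k
          have h3 : (pent k : ℤ) = 2 := by omega
          rw [h3] at h2
          have h4 : (k - 1) * (3 * k + 4) = 0 := by linarith
          rcases mul_eq_zero.1 h4 with h5 | h5 <;> omega
        · simp
    rw [hz]
    simp [Jba, Jb, qPochInf_zero_left]
  · have h1 := (th1_norm_summable hq0 hq (c := 15) (by norm_num) 11).of_norm.hasSum
    have h2 := (th1_norm_summable hq0 hq (c := 15) (by norm_num) 14).of_norm.hasSum
    rw [← quintuple hq0 hq h1 h2, zSum_eq hq0 hq]
    ring

/-! ### The section of the series at `ζ` -/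

/-- The exponents of the Hecke–Rogers series as natural numbers (the negative values of `ex` never
occur with a nonzero coefficient). -/
def exN (p : ℕ × ℤ) : ℕ := (ex p.1 p.2).toNat

theorem exN_cast {p : ℕ × ℤ} (h : 2 * |p.2| ≤ p.1) : (exN p : ℤ) = ex p.1 p.2 :=
  Int.toNat_of_nonneg (ex_nonneg h)

/-- The coefficients of `∑_n ∑_{2|k| ≤ n} (-1)^{n+k} q^{n(n+1)/2 - k(3k+1)/2}`. -/
noncomputable def hcP (p : ℕ × ℤ) : ℂ := hc p.1 p.2

theorem hcP_adm : Adm hcP exN := fun q hq => by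
  simpa [hcP, exN] using hc_summable 1 hq

/-- The Hecke–Rogers series at `z = 1`, where `R` is the generating function of partitions. -/
theorem hcP_tsum {q : ℂ} (hq0 : q ≠ 0) (hq : ‖q‖ < 1) :
    ∑' p, hcP p * q ^ exN p = qPochInf q q ^ 2 := by
  have h1 := rankGFtilde_eq_hr hq0 hq (ann_of_norm_one hq norm_one)
  rw [rankGFtilde_one hq, hr, inv_one] at h1
  have h2 : hS 1 q = ∑' p, hcP p * q ^ exN p := by
    rw [hS]
    congr 1
    funext p
    rw [hTerm_eq, one_pow, mul_one]; rfl
  rw [← h2]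
  linear_combination -h1 / 2

/-- The terms of the section of `∑_n ∑_k (-1)^{n+k} q^{n(n+1)/2 - k(3k+1)/2}` along exponents `4`
modulo `5`. -/
noncomputable def vTerm (q : ℂ) (p : ℕ × ℤ) : ℂ := sect 4 hcP exN p * q ^ (exN p / 5)

theorem vTerm_summable {q : ℂ} (hq : ‖q‖ < 1) : Summable fun p => ‖vTerm q p‖ := hcP_adm.sect 4 q hq

theorem vTerm_tsum {q : ℂ} (hq : ‖q‖ < 1) : ∑' p, vTerm q p = zSum q ^ 2 := by
  rw [← pent2_sect hq]
  refine dissect hcP_adm pent2_adm (fun q hq0 hq => ?_) hq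
  have h := pentagonal_hasSum hq0 hq
  have hs := th1_norm_summable hq0 hq (c := 3) (by norm_num) 2
  rw [hcP_tsum hq0 hq, sq, ← (h.mul_norm h hs hs).tsum_eq]
  congr 1
  funext p
  rw [th1_pent, th1_pent, pow_add]
  ring

theorem ex_mod {n : ℕ} {k : ℤ} (h : ex n k % 5 = 4) :
    ((n % 5 = 0 ∨ n % 5 = 4) ∧ k % 5 = 4) ∨ ((n % 5 = 1 ∨ n % 5 = 3) ∧ (k % 5 = 1 ∨ k % 5 = 2)) := by
  have h1 := congrArg (· % 5) (two_ex n k)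
  have hn : n % 5 = 0 ∨ n % 5 = 1 ∨ n % 5 = 2 ∨ n % 5 = 3 ∨ n % 5 = 4 := by omega
  have hk : k % 5 = 0 ∨ k % 5 = 1 ∨ k % 5 = 2 ∨ k % 5 = 3 ∨ k % 5 = 4 := by omega
  rcases hn with hn | hn | hn | hn | hn <;>
    have hn' : (n : ℤ) % 5 = _ := congrArg (Nat.cast : ℕ → ℤ) hn <;>
    rcases hk with hk | hk | hk | hk | hk <;>
    simp [Int.mul_emod, Int.add_emod, Int.sub_emod, hn', hk, h] at h1 <;> omega

theorem vTerm_support {q : ℂ} {p : ℕ × ℤ} (h : vTerm q p ≠ 0) :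
    2 * |p.2| ≤ p.1 ∧ ex p.1 p.2 % 5 = 4 := by
  have h1 : exN p % 5 = 4 := by
    by_contra h1
    simp [vTerm, sect, h1] at h
  have h2 : 2 * |p.2| ≤ p.1 := by
    by_contra h2
    simp [vTerm, sect, hcP, hc, h2] at h
  exact ⟨h2, by rw [← exN_cast h2]; omega⟩

/-- The terms `vTerm` with `n ≡ 0, 4` modulo `5`. -/
noncomputable def xTerm (q : ℂ) (p : ℕ × ℤ) : ℂ :=
  if p.1 % 5 = 0 ∨ p.1 % 5 = 4 then vTerm q p else 0

theorem xTerm_summable {q : ℂ} (hq : ‖q‖ < 1) : Summable fun p => ‖xTerm q p‖ :=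
  Summable.of_nonneg_of_le (fun _ => norm_nonneg _) (fun p => by rw [xTerm]; split_ifs <;> simp)
    (vTerm_summable hq)

theorem zeta5_pow : zeta5 ^ 5 = 1 := by
  rw [zeta5, ← Complex.exp_nat_mul, ← Complex.exp_two_pi_mul_I]
  congr 1
  push_cast; ring

theorem zeta5_ne_zero : zeta5 ≠ 0 := Complex.exp_ne_zero _

theorem zeta5_norm : ‖zeta5‖ = 1 :=
  Complex.norm_eq_one_of_pow_eq_one zeta5_pow (by norm_num)

theorem one_add_zeta5 : 1 + zeta5 ≠ 0 := fun h => by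
  have h1 : zeta5 = -1 := by linear_combination h
  have := zeta5_pow
  rw [h1] at this
  norm_num at this

theorem zeta5_sum : 1 + zeta5 + zeta5 ^ 2 + zeta5 ^ 3 + zeta5 ^ 4 = 0 := by
  have h : IsPrimitiveRoot zeta5 5 := Complex.isPrimitiveRoot_exp 5 (by norm_num)
  have := h.geom_sum_eq_zero (by norm_num)
  simpa [Finset.sum_range_succ] using this

/-- The coefficient `ζ^{n+1} + ζ^{-n}` of the Hecke–Rogers series at `z = ζ`. -/
noncomputable def zc (n : ℕ) : ℂ := zeta5 ^ (n + 1) + zeta5⁻¹ ^ n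

theorem zc_mod {n : ℕ} : (n % 5 = 0 ∨ n % 5 = 4 → zc n = 1 + zeta5) ∧
    (n % 5 = 1 ∨ n % 5 = 3 → zc n = zeta5 ^ 2 + zeta5 ^ 4) := by
  have hinv : zeta5⁻¹ = zeta5 ^ 4 := by
    refine inv_eq_of_mul_eq_one_right ?_
    rw [← zeta5_pow]; ring
  have h5 : ∀ r, zc (5 * (n / 5) + r) = zeta5 ^ (r + 1) + zeta5 ^ (4 * r) := fun r => by
    rw [zc, hinv, ← pow_mul, show 5 * (n / 5) + r + 1 = 5 * (n / 5) + (r + 1) by ring,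
      show 4 * (5 * (n / 5) + r) = 5 * (4 * (n / 5)) + 4 * r by ring, pow_add _ (5 * (n / 5)),
      pow_add _ (5 * (4 * (n / 5))), pow_mul, pow_mul, zeta5_pow, one_pow, one_pow, one_mul,
      one_mul]
  have hn := Nat.div_add_mod n 5
  have z5 := zeta5_pow
  constructor <;> rintro (h | h) <;> rw [h] at hn <;> have := h5 (n % 5) <;>
    rw [h, hn] at this <;> rw [this] <;> norm_num only
  · ring
  · linear_combination (1 + zeta5 * (zeta5 ^ 10 + zeta5 ^ 5 + 1)) * z5
  · linear_combination (zeta5 ^ 2 * (zeta5 ^ 5 + 1)) * z5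

/-- The coefficients of `R̃(ζ, q)` as a Hecke–Rogers series. -/
noncomputable def zcP (p : ℕ × ℤ) : ℂ := hcP p * zc p.1

theorem zcP_term (q : ℂ) (p : ℕ × ℤ) :
    zcP p * q ^ exN p = zeta5 * hTerm zeta5 q p + hTerm zeta5⁻¹ q p := by
  rw [hTerm_eq, hTerm_eq, zcP, hcP, zc, exN]
  ring

theorem zcP_adm : Adm zcP exN := fun q hq => by
  simp only [zcP_term]
  refine Summable.of_nonneg_of_le (fun _ => norm_nonneg _) (fun p => norm_add_le _ _) ?_
  refine Summable.add ?_ (hTerm_norm_summable _ hq)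
  simp only [norm_mul]
  exact (hTerm_norm_summable _ hq).mul_left _

theorem zcP_tsum {q : ℂ} (hq0 : q ≠ 0) (hq : ‖q‖ < 1) :
    rankGFtilde zeta5 q = ∑' p, zcP p * q ^ exN p := by
  rw [rankGFtilde_eq_hr hq0 hq (ann_of_norm_one hq zeta5_norm), hr]
  simp only [zcP_term]
  exact (((hS_hasSum _ hq).mul_left _).add (hS_hasSum _ hq)).tsum_eq.symm

theorem zcP_coef : coefOf zcP exN 0 ≠ 0 := by
  have h : coefOf zcP exN 0 = 1 + zeta5 := by
    rw [coefOf, tsum_eq_single ((0 : ℕ), (0 : ℤ))]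
    · rw [if_pos (by decide), zcP, hcP, hc, zc_mod.1 (by norm_num)]
      simp
    · rintro ⟨n, k⟩ hp
      split_ifs with h
      · by_cases h2 : 2 * |k| ≤ n
        · have h3 := exN_cast (p := (n, k)) h2
          have h4 := ex_bound h2
          simp only [h, Nat.cast_zero] at h3
          have hn : n = 0 := by
            by_contra hn
            have : (1 : ℤ) ≤ n := by omega
            nlinarith
          subst hn
          have hk : k = 0 := by
            have := abs_nonneg k
            exact abs_eq_zero.1 (by push_cast at h2; omega)
          exact absurd (by rw [hk]) hp
        · simp [zcP, hcP, hc, h2]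
      · rfl
  rw [h]
  exact one_add_zeta5

/-- The section of `R̃(ζ, q)`, reduced to the two double series with rational coefficients. -/
theorem zcP_sect {q : ℂ} (hq : ‖q‖ < 1) : ∑' p, sect 4 zcP exN p * q ^ (exN p / 5) =
    (zeta5 ^ 2 + zeta5 ^ 4) * zSum q ^ 2 + (2 + 2 * zeta5 + zeta5 ^ 3) * ∑' p, xTerm q p := by
  rw [← vTerm_tsum hq]
  refine HasSum.tsum_eq (HasSum.of_eq (((vTerm_summable hq).of_norm.hasSum.mul_left _).add
    ((xTerm_summable hq).of_norm.hasSum.mul_left _)) fun p => ?_)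
  have e : sect 4 zcP exN p * q ^ (exN p / 5) = zc p.1 * vTerm q p := by
    rw [vTerm, sect, sect, zcP]
    split_ifs <;> ring
  rw [e, xTerm]
  by_cases h : vTerm q p = 0
  · simp [h]
  · rcases ex_mod (vTerm_support h).2 with ⟨h1, -⟩ | ⟨h1, -⟩
    · rw [if_pos h1, zc_mod.1 h1]
      linear_combination -vTerm q p * zeta5_sum
    · rw [if_neg (by omega), zc_mod.2 h1]
      ring

/-! ### Comparison with the series at `(q², q⁵)` -/

/-- The exponent `4` does not occur with `n ≡ 0, 4` modulo `5`: it would force `n ≤ 4` and `k = -1`. -/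
theorem xTerm_zero (p : ℕ × ℤ) : xTerm 0 p = 0 := by
  obtain ⟨n, k⟩ := p
  by_contra h
  have h1 : n % 5 = 0 ∨ n % 5 = 4 := by
    by_contra h1
    exact h (if_neg h1)
  rw [xTerm, if_pos h1] at h
  obtain ⟨h2, h3⟩ := vTerm_support h
  have h4 : exN (n, k) / 5 = 0 := by
    by_contra h4
    exact h (by rw [vTerm, zero_pow h4, mul_zero])
  have h5 := exN_cast h2
  have h6 := ex_bound h2
  have h7 := ex_mod h3
  simp only at h2 h3 h5 h6 h7
  have h8 : ex n k = 4 := by omega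
  have hn : n ≤ 4 := by
    by_contra hn
    have : (5 : ℤ) ≤ n := by omega
    nlinarith
  obtain ⟨h9, h10⟩ := abs_le.1 (show |k| ≤ 2 by omega)
  have hk : k = -1 := by omega
  subst hk
  have hn4 : n = 4 := by
    rw [abs_neg, abs_one] at h2
    omega
  subst hn4
  exact absurd h8 (by decide)

/-- The exponents of the subseries `n = 5m`, `k = 5l - 1` of the section, raised by one. -/
def gA (p : ℕ × ℤ) : ℤ := 5 * tri p.1 + 3 * p.1 - 15 * tri p.2 - 5 * p.2

/-- The exponents of the subseries `n = 5m + 4`, raised by one. -/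
def gB (p : ℕ × ℤ) : ℤ := 5 * tri p.1 + 7 * p.1 + 2 - 15 * tri p.2 - 5 * p.2

theorem vTerm_eq {q : ℂ} (hq0 : q ≠ 0) {n : ℕ} {k g : ℤ} (h : ex n k = 5 * (g - 1) + 4) :
    vTerm q (n, k) = q⁻¹ * (hc n k * q ^ g) := by
  rw [vTerm, sect, hcP]
  by_cases h2 : 2 * |k| ≤ n
  · have h3 := exN_cast (p := (n, k)) h2
    simp only [h] at h3
    rw [if_pos (by omega), ← zpow_natCast, show ((exN (n, k) / 5 : ℕ) : ℤ) = g - 1 by omega,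
      zpow_sub_one₀ hq0]
    ring
  · simp [hc, h2]

theorem xTerm_A {q : ℂ} (hq0 : q ≠ 0) (p : ℕ × ℤ) :
    xTerm q (5 * p.1, 5 * p.2 - 1) = q⁻¹ * (hc (5 * p.1) (5 * p.2 - 1) * q ^ gA p) := by
  rw [xTerm, if_pos (by simp), vTerm_eq hq0]
  have h1 := two_ex (5 * p.1) (5 * p.2 - 1)
  have h2 := two_tri p.1
  have h3 := two_tri p.2
  rw [gA]
  push_cast at h1
  linarith

theorem xTerm_B {q : ℂ} (hq0 : q ≠ 0) (p : ℕ × ℤ) :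
    xTerm q (5 * p.1 + 4, 5 * p.2 - 1) = q⁻¹ * (hc (5 * p.1 + 4) (5 * p.2 - 1) * q ^ gB p) := by
  rw [xTerm, if_pos (by simp only; omega), vTerm_eq hq0]
  have h1 := two_ex (5 * p.1 + 4) (5 * p.2 - 1)
  have h2 := two_tri p.1
  have h3 := two_tri p.2
  rw [gB]
  push_cast at h1
  linarith

theorem xTerm_hasSum {q : ℂ} (hq0 : q ≠ 0) (hq : ‖q‖ < 1) :
    HasSum (fun p : ℕ × ℤ => hc (5 * p.1) (5 * p.2 - 1) * q ^ gA p +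
      hc (5 * p.1 + 4) (5 * p.2 - 1) * q ^ gB p) (q * ∑' p, xTerm q p) := by
  have hs := xTerm_summable hq
  set i : ℕ × ℤ → ℕ × ℤ := fun p => (5 * p.1, 5 * p.2 - 1)
  set j : ℕ × ℤ → ℕ × ℤ := fun p => (5 * p.1 + 4, 5 * p.2 - 1)
  have hi : i.Injective := fun a b h => by
    simp only [i, Prod.mk.injEq] at h
    exact Prod.ext (by omega) (by omega)
  have hj : j.Injective := fun a b h => by
    simp only [j, Prod.mk.injEq] at h
    exact Prod.ext (by omega) (by omega)
  rw [tsum_split' hi hj (fun a b h => ?_) ?_ hs.of_norm]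
  · refine (((hs.of_norm.comp_injective hi).hasSum.add
      (hs.of_norm.comp_injective hj).hasSum).mul_left q).of_eq fun p => ?_
    simp only [Function.comp, i, j]
    rw [xTerm_A hq0, xTerm_B hq0, mul_add, mul_inv_cancel_left₀ hq0, mul_inv_cancel_left₀ hq0]
  · rintro ⟨n, k⟩ h
    have h1 : n % 5 = 0 ∨ n % 5 = 4 := by
      by_contra h1
      exact h (if_neg h1)
    rw [xTerm, if_pos h1] at h
    have h2 := ex_mod (vTerm_support h).2
    simp only at h2
    rcases h1 with h1 | h1
    · exact Or.inl ⟨(n / 5, k / 5 + 1), Prod.ext (by simp only [i]; omega) (by simp only [i]; omega)⟩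
    · exact Or.inr ⟨(n / 5, k / 5 + 1), Prod.ext (by simp only [j]; omega) (by simp only [j]; omega)⟩
  · simp only [i, j, Prod.mk.injEq] at h
    omega

/-- The expansion of `R̃(q²;q⁵)` with `k` replaced by `-l`: its exponents are those of the section. -/
theorem hr_hasSum {q : ℂ} (hq0 : q ≠ 0) (hq : ‖q‖ < 1) :
    HasSum (fun p : ℕ × ℤ => hc p.1 p.2 * q ^ gA p + hc p.1 p.2 * q ^ gB p)
      (hr (q ^ 2) (q ^ 5)) := by
  have h5 := norm_pow_lt hq (c := 5) (by norm_num)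
  have h1 := ((hS_hasSum (q ^ 2) h5).mul_left (q ^ 2)).add (hS_hasSum (q ^ 2)⁻¹ h5)
  have h2 := ((Equiv.refl ℕ).prodCongr (Equiv.neg ℤ)).hasSum_iff.2 h1
  refine h2.of_eq fun p => ?_
  obtain ⟨m, l⟩ := p
  simp only [Function.comp, Equiv.prodCongr_apply, Prod.map, Equiv.refl_apply, Equiv.neg_apply,
    hTerm]
  have h3 : hc m (-l) = hc m l := by
    rw [hc, hc, abs_neg, neg_one_zpow_congr (m := (m : ℤ) + -l) (n := m + l) ⟨-l, by ring⟩]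
  have e1 := two_ex m (-l)
  have t1 := two_tri m
  have t2 := two_tri l
  have eA : gA (m, l) = -(2 * m) + 5 * ex m (-l) := by rw [gA]; linarith
  have eB : gB (m, l) = 2 + 2 * m + 5 * ex m (-l) := by rw [gB]; linarith
  have p5 : (q ^ 5) ^ ex m (-l) = q ^ (5 * ex m (-l)) := by rw [zpow_mul, zpow_ofNat]
  have p2 : q ^ (2 * (m : ℤ)) = (q ^ 2) ^ m := by rw [zpow_mul, zpow_ofNat, zpow_natCast]
  rw [h3, eA, eB, p5, zpow_add₀ hq0, zpow_add₀ hq0, zpow_add₀ hq0, zpow_neg, p2, inv_pow,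
    zpow_ofNat]
  ring

/-- Adding the two double series cancels everything but a theta series on the boundary
`m = -2l` (`l ≤ 0`), `m = 2l - 1` (`l ≥ 1`). -/
theorem hr_add_x {q : ℂ} (hq0 : q ≠ 0) (hq : ‖q‖ < 1) :
    hr (q ^ 2) (q ^ 5) + q * ∑' p, xTerm q p = Jba 5 1 q := by
  have h := (hr_hasSum hq0 hq).add (xTerm_hasSum hq0 hq)
  set b : ℤ → ℕ × ℤ := fun l => (if l ≤ 0 then (-2 * l).toNat else (2 * l - 1).toNat, l) with hb
  have hinj : b.Injective := fun x y hxy => congrArg Prod.snd hxy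
  rw [← hinj.hasSum_iff] at h
  · have h1 := th1_hasSum hq0 hq (a := 4) (b := 1) (c := 5) (by norm_num) (by norm_num)
    have h2 : Jba 5 1 q = qPochInf (q ^ 4) (q ^ 5) * qPochInf (q ^ 1) (q ^ 5) *
        qPochInf (q ^ 5) (q ^ 5) := by rw [Jba]; ring
    rw [h2]
    refine h.unique (h1.of_eq fun l => ?_)
    have t2 := two_tri l
    have h5 := le_abs_self l
    have h6 := neg_abs_le l
    simp only [Function.comp, hb]
    by_cases hl : l ≤ 0
    · obtain ⟨m, hm⟩ : ∃ m : ℕ, (m : ℤ) = -2 * l := ⟨(-2 * l).toNat, by omega⟩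
      have t1 := two_tri m
      rw [if_pos hl, show (-2 * l).toNat = m by omega]
      have a1 : |l| = -l := abs_of_nonpos hl
      have a2 : |5 * l - 1| = -(5 * l - 1) := abs_of_nonpos (by omega)
      have eA : gA (m, l) = 5 * tri l + 4 * l := by
        rw [hm] at t1; rw [gA]; simp only; rw [hm] at *; linarith
      simp only [hc, a1, a2]
      rw [if_pos (by omega), if_neg (by push_cast; omega), if_pos (by push_cast; omega), th1, eA,
        neg_one_zpow_congr (m := (m : ℤ) + l) (n := l) ⟨-l, by rw [hm]; ring⟩,
        neg_one_zpow_congr_neg (m := ((5 * m + 4 : ℕ) : ℤ) + (5 * l - 1)) (n := l)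
          ⟨-3 * l + 1, by push_cast; rw [hm]; ring⟩]
      push_cast; ring
    · obtain ⟨m, hm⟩ : ∃ m : ℕ, (m : ℤ) = 2 * l - 1 := ⟨(2 * l - 1).toNat, by omega⟩
      have t1 := two_tri m
      rw [if_neg hl, show (2 * l - 1).toNat = m by omega]
      have a1 : |l| = l := abs_of_nonneg (by omega)
      have a2 : |5 * l - 1| = 5 * l - 1 := abs_of_nonneg (by omega)
      have eB : gB (m, l) = 5 * tri l + 4 * l := by
        rw [gB]; simp only; rw [hm] at *; linarith
      simp only [hc, a1, a2]
      rw [if_neg (by omega), if_neg (by push_cast; omega), if_pos (by push_cast; omega), th1, eB,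
        neg_one_zpow_congr (m := ((5 * m + 4 : ℕ) : ℤ) + (5 * l - 1)) (n := l)
          ⟨7 * l - 1, by push_cast; rw [hm]; ring⟩]
      push_cast; ring
  · rintro ⟨m, l⟩ hp
    have hm1 : l ≤ 0 → (m : ℤ) ≠ -2 * l := fun h0 h1 => hp ⟨l, by
      simp only [hb, if_pos h0, Prod.mk.injEq, and_true]; omega⟩
    have hm2 : 1 ≤ l → (m : ℤ) ≠ 2 * l - 1 := fun h0 h1 => hp ⟨l, by
      simp only [hb, if_neg (show ¬ l ≤ 0 by omega), Prod.mk.injEq, and_true]; omega⟩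
    have sA : hc (5 * m) (5 * l - 1) = -hc m l := by
      rw [hc, hc, neg_one_zpow_congr_neg (m := ((5 * m : ℕ) : ℤ) + (5 * l - 1)) (n := m + l)
        ⟨2 * m + 2 * l - 1, by push_cast; ring⟩]
      rcases le_or_gt l 0 with h0 | h0
      · have := hm1 h0
        rw [abs_of_nonpos h0, abs_of_nonpos (show 5 * l - 1 ≤ 0 by omega)]
        split_ifs <;> first | rfl | (exfalso; push_cast at *; omega) | simp
      · rw [abs_of_pos h0, abs_of_pos (show 0 < 5 * l - 1 by omega)]
        split_ifs <;> first | rfl | (exfalso; push_cast at *; omega) | simp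
    have sB : hc (5 * m + 4) (5 * l - 1) = -hc m l := by
      rw [hc, hc, neg_one_zpow_congr_neg (m := ((5 * m + 4 : ℕ) : ℤ) + (5 * l - 1)) (n := m + l)
        ⟨2 * m + 2 * l + 1, by push_cast; ring⟩]
      rcases le_or_gt l 0 with h0 | h0
      · rw [abs_of_nonpos h0, abs_of_nonpos (show 5 * l - 1 ≤ 0 by omega)]
        split_ifs <;> first | rfl | (exfalso; push_cast at *; omega) | simp
      · have := hm2 h0
        rw [abs_of_pos h0, abs_of_pos (show 0 < 5 * l - 1 by omega)]
        split_ifs <;> first | rfl | (exfalso; push_cast at *; omega) | simp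
    simp only [sA, sB]
    ring

theorem xTerm_tsum {q : ℂ} (hq : ‖q‖ < 1) :
    ∑' p, xTerm q p = -(q⁻¹ * (rankGFtilde (q ^ 2) (q ^ 5) - Jba 5 1 q)) := by
  by_cases hq0 : q = 0
  · subst hq0
    simp [xTerm_zero]
  · have hann : q ^ 2 ∈ ann (q ^ 5) := by
      have hn : 0 < ‖q‖ := norm_pos_iff.2 hq0
      refine ⟨?_, ?_⟩
      · rw [← pow_add]; exact norm_pow_lt hq (by norm_num)
      · rw [norm_pow, norm_pow]
        exact pow_lt_pow_right_of_lt_one₀ hn hq (by norm_num)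
    rw [rankGFtilde_eq_hr (pow_ne_zero 5 hq0) (norm_pow_lt hq (by norm_num)) hann,
      ← hr_add_x hq0 hq, sub_add_cancel_left, mul_neg, neg_neg, inv_mul_cancel_left₀ hq0]

theorem U54_rankGFtilde (a : ℕ → ℂ)
    (ha : ∀ q : ℂ, ‖q‖ < 1 → rankGFtilde zeta5 q = ∑' n : ℕ, a n * q ^ n) :
    ∀ q : ℂ, ‖q‖ < 1 →
      ∑' n : ℕ, a (5 * n + 4) * q ^ n =
        (zeta5 ^ 2 + zeta5 ^ 4) * (Jb 5 q) ^ 2 * (Jba 5 1 q) ^ 2 / (Jba 5 2 q) ^ 2 -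
          q⁻¹ * (2 + 2 * zeta5 + zeta5 ^ 3) * (rankGFtilde (q ^ 2) (q ^ 5) - Jba 5 1 q) := by
  intro q hq
  have hz : ∀ q : ℂ, q ≠ 0 → ‖q‖ < 1 → ∑' n : ℕ, a n * q ^ n = ∑' p, zcP p * q ^ exN p :=
    fun q hq0 hq => (ha q hq).symm.trans (zcP_tsum hq0 hq)
  have hadm : Adm a (fun n => n) := zcP_adm.of_tsum_eq zcP_coef hz
  have h1 := dissect hadm zcP_adm hz hq
  have h2 : ∑' n : ℕ, a (5 * n + 4) * q ^ n = ∑' n, sect 4 a (fun n => n) n * q ^ (n / 5) := by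
    have hinj : Function.Injective fun n : ℕ => 5 * n + 4 := fun x y h => by simpa using h
    rw [← hinj.tsum_eq (f := fun n => sect 4 a (fun n => n) n * q ^ (n / 5))]
    · congr 1
      funext n
      rw [sect, if_pos (by omega), show (5 * n + 4) / 5 = n by omega]
    · intro n hn
      refine ⟨n / 5, ?_⟩
      have : n % 5 = 4 := by
        by_contra h
        simp [sect, h] at hn
      simp only
      omega
  rw [h2, h1, zcP_sect hq, zSum_sq hq, xTerm_tsum hq]
  ring
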